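/- Let H be a quasi-Hopf algebra, (𝔄, ρ, Φ_ρ) a right H-comodule algebra, and let 𝒱 = 𝔄⊗H and 𝒰 = H⊗𝔄 carry the two-sided (𝔄,H)-Hopf module structures ρ_𝒱(a⊗h) = ∑aX̃¹_ρ⊗h₁X̃²_ρ⊗h₂X̃³_ρ (with h≻(a⊗h') = a⊗hh', (a⊗h)≺a' = ∑aa'⟨0⟩⊗ha'⟨1⟩) and ρ_𝒰(h⊗a) = ∑h₁S⁻¹(q²_L X̃³₂ g²)⊗X̃¹a⟨0⟩⊗h₂S⁻¹(q¹_L X̃³₁ g¹)X̃²a⟨1⟩ (with h≻(h'⊗a) = hh'⊗a, (h⊗a)≺a' = h⊗aa'). Then θ: 𝒱 → 𝒰 given by θ(a⊗h) = ∑ h S⁻¹(a⟨1⟩ p̃²_ρ) ⊗ a⟨0⟩ p̃¹_ρ is an isomorphism of two-sided (𝔄,H)-Hopf modules (left H-linear, right 𝔄-linear and right H-colinear), with inverse θ⁻¹(h⊗a) = ∑ q̃¹_ρ a⟨0⟩ ⊗ h q̃²_ρ a⟨1⟩. -/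

import Mathlib

open TensorProduct Finset

noncomputable section

/-- A quasi-bialgebra in the sense of Drinfeld, together with chosen finite
Sweedler-type families representing the comultiplication and the reassociator. -/
structure QuasiBialgebra (k : Type*) [Field k] (H : Type*) [Ring H] [Algebra k H] where
  comul : H →ₐ[k] H ⊗[k] H
  counit : H →ₐ[k] k
  nD : ℕ
  D1 : H → ℕ → H
  D2 : H → ℕ → H
  hcomul : ∀ h, comul h = ∑ i ∈ range nD, D1 h i ⊗ₜ[k] D2 h i
  nP : ℕ
  X1 : ℕ → H
  X2 : ℕ → H
  X3 : ℕ → H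
  nQ : ℕ
  x1 : ℕ → H
  x2 : ℕ → H
  x3 : ℕ → H
  P_inv : ∑ s ∈ range nP, ∑ q ∈ range nQ,
      (X1 s * x1 q) ⊗ₜ[k] ((X2 s * x2 q) ⊗ₜ[k] (X3 s * x3 q)) =
      (1 : H) ⊗ₜ[k] ((1 : H) ⊗ₜ[k] (1 : H))
  inv_P : ∑ q ∈ range nQ, ∑ s ∈ range nP,
      (x1 q * X1 s) ⊗ₜ[k] ((x2 q * X2 s) ⊗ₜ[k] (x3 q * X3 s)) =
      (1 : H) ⊗ₜ[k] ((1 : H) ⊗ₜ[k] (1 : H))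
  coassoc : ∀ h : H,
    ∑ i ∈ range nD, ∑ j ∈ range nD,
      D1 h i ⊗ₜ[k] (D1 (D2 h i) j ⊗ₜ[k] D2 (D2 h i) j) =
    ∑ s ∈ range nP, ∑ i ∈ range nD, ∑ j ∈ range nD, ∑ q ∈ range nQ,
      (X1 s * D1 (D1 h i) j * x1 q) ⊗ₜ[k]
        ((X2 s * D2 (D1 h i) j * x2 q) ⊗ₜ[k] (X3 s * D2 h i * x3 q))
  counit_r : ∀ h : H, ∑ i ∈ range nD, counit (D2 h i) • D1 h i = h
  counit_l : ∀ h : H, ∑ i ∈ range nD, counit (D1 h i) • D2 h i = h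
  pentagon :
    ∑ p ∈ range nP, ∑ s ∈ range nP, ∑ l ∈ range nD, ∑ r ∈ range nP,
      (X1 s * X1 r) ⊗ₜ[k] ((X1 p * D1 (X2 s) l * X2 r) ⊗ₜ[k]
        ((X2 p * D2 (X2 s) l * X3 r) ⊗ₜ[k] (X3 p * X3 s))) =
    ∑ p ∈ range nP, ∑ s ∈ range nP, ∑ l ∈ range nD, ∑ j ∈ range nD,
      (X1 p * D1 (X1 s) j) ⊗ₜ[k] ((X2 p * D2 (X1 s) j) ⊗ₜ[k]
        ((D1 (X3 p) l * X2 s) ⊗ₜ[k] (D2 (X3 p) l * X3 s)))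
  normal : ∑ s ∈ range nP, counit (X2 s) • (X1 s ⊗ₜ[k] X3 s) = (1 : H) ⊗ₜ[k] (1 : H)

/-- A quasi-Hopf algebra: a quasi-bialgebra with an anti-automorphism `S`
and elements `aE = α`, `bE = β` satisfying the antipode axioms. -/
structure QuasiHopfAlgebra (k : Type*) [Field k] (H : Type*) [Ring H] [Algebra k H]
    extends QuasiBialgebra k H where
  S : H →ₗ[k] H
  Sinv : H →ₗ[k] H
  S_Sinv : ∀ h, S (Sinv h) = h
  Sinv_S : ∀ h, Sinv (S h) = h
  S_one : S 1 = 1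
  S_mul : ∀ g h : H, S (g * h) = S h * S g
  aE : H
  bE : H
  antip_l : ∀ h, ∑ i ∈ range nD, S (D1 h i) * aE * D2 h i = counit h • aE
  antip_r : ∀ h, ∑ i ∈ range nD, D1 h i * bE * S (D2 h i) = counit h • bE
  antip_X : ∑ s ∈ range nP, X1 s * bE * S (X2 s) * aE * X3 s = 1
  antip_x : ∑ q ∈ range nQ, S (x1 q) * aE * x2 q * bE * S (x3 q) = 1

/-- The Drinfeld twist `f` of a quasi-Hopf algebra, given by families `f₁ ⊗ f₂`
with inverse `g₁ ⊗ g₂`, together with its defining formula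
`f = ∑ (S⊗S)(Δᵒᵖ(x¹)) γ Δ(x²βS(x³))`, `γ = ∑ S(A²)αA³ ⊗ S(A¹)αA⁴`,
`∑A¹⊗A²⊗A³⊗A⁴ = (Φ⊗1)(Δ⊗id⊗id)(Φ⁻¹)`. -/
structure DrinfeldTwist {k : Type*} [Field k] {H : Type*} [Ring H] [Algebra k H]
    (QH : QuasiHopfAlgebra k H) where
  nf : ℕ
  f1 : ℕ → H
  f2 : ℕ → H
  g1 : ℕ → H
  g2 : ℕ → H
  f_inv : ∑ t ∈ range nf, ∑ u ∈ range nf,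
      (f1 t * g1 u) ⊗ₜ[k] (f2 t * g2 u) = (1 : H) ⊗ₜ[k] (1 : H)
  inv_f : ∑ u ∈ range nf, ∑ t ∈ range nf,
      (g1 u * f1 t) ⊗ₜ[k] (g2 u * f2 t) = (1 : H) ⊗ₜ[k] (1 : H)
  h_f : ∑ t ∈ range nf, f1 t ⊗ₜ[k] f2 t =
    ∑ j ∈ range QH.nQ, ∑ l ∈ range QH.nD, ∑ p ∈ range QH.nP, ∑ j' ∈ range QH.nQ,
      ∑ l' ∈ range QH.nD, ∑ l'' ∈ range QH.nD,
      (QH.S (QH.D2 (QH.x1 j) l) *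
          (QH.S (QH.X2 p * QH.D2 (QH.x1 j') l') * QH.aE * (QH.X3 p * QH.x2 j')) *
          QH.D1 (QH.x2 j * QH.bE * QH.S (QH.x3 j)) l'') ⊗ₜ[k]
        (QH.S (QH.D1 (QH.x1 j) l) *
          (QH.S (QH.X1 p * QH.D1 (QH.x1 j') l') * QH.aE * QH.x3 j') *
          QH.D2 (QH.x2 j * QH.bE * QH.S (QH.x3 j)) l'')

/-- A right `H`-comodule algebra over a quasi-bialgebra, with Sweedler families. -/
structure RightComoduleAlgebra {k : Type*} [Field k] {H : Type*} [Ring H] [Algebra k H]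
    (QB : QuasiBialgebra k H) (A : Type*) [Ring A] [Algebra k A] where
  rho : A →ₐ[k] A ⊗[k] H
  nR : ℕ
  r0 : A → ℕ → A
  r1 : A → ℕ → H
  hrho : ∀ a, rho a = ∑ i ∈ range nR, r0 a i ⊗ₜ[k] r1 a i
  nP : ℕ
  P1 : ℕ → A
  P2 : ℕ → H
  P3 : ℕ → H
  nQ : ℕ
  Q1 : ℕ → A
  Q2 : ℕ → H
  Q3 : ℕ → H
  P_inv : ∑ s ∈ range nP, ∑ q ∈ range nQ,
      (P1 s * Q1 q) ⊗ₜ[k] ((P2 s * Q2 q) ⊗ₜ[k] (P3 s * Q3 q)) =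
      (1 : A) ⊗ₜ[k] ((1 : H) ⊗ₜ[k] (1 : H))
  inv_P : ∑ q ∈ range nQ, ∑ s ∈ range nP,
      (Q1 q * P1 s) ⊗ₜ[k] ((Q2 q * P2 s) ⊗ₜ[k] (Q3 q * P3 s)) =
      (1 : A) ⊗ₜ[k] ((1 : H) ⊗ₜ[k] (1 : H))
  rca1 : ∀ a : A,
    ∑ s ∈ range nP, ∑ i ∈ range nR, ∑ j ∈ range nR,
      (P1 s * r0 (r0 a i) j) ⊗ₜ[k] ((P2 s * r1 (r0 a i) j) ⊗ₜ[k] (P3 s * r1 a i)) =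
    ∑ i ∈ range nR, ∑ l ∈ range QB.nD, ∑ s ∈ range nP,
      (r0 a i * P1 s) ⊗ₜ[k] ((QB.D1 (r1 a i) l * P2 s) ⊗ₜ[k] (QB.D2 (r1 a i) l * P3 s))
  rca2 :
    ∑ s ∈ range QB.nP, ∑ i ∈ range nP, ∑ l ∈ range QB.nD, ∑ j ∈ range nP,
      (P1 i * P1 j) ⊗ₜ[k] ((QB.X1 s * QB.D1 (P2 i) l * P2 j) ⊗ₜ[k]
        ((QB.X2 s * QB.D2 (P2 i) l * P3 j) ⊗ₜ[k] (QB.X3 s * P3 i))) =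
    ∑ i ∈ range nP, ∑ l ∈ range QB.nD, ∑ j ∈ range nP, ∑ u ∈ range nR,
      (P1 i * r0 (P1 j) u) ⊗ₜ[k] ((P2 i * r1 (P1 j) u) ⊗ₜ[k]
        ((QB.D1 (P3 i) l * P2 j) ⊗ₜ[k] (QB.D2 (P3 i) l * P3 j)))
  rca3 : ∀ a, ∑ i ∈ range nR, QB.counit (r1 a i) • r0 a i = a
  rca4a : ∑ s ∈ range nP, QB.counit (P2 s) • (P1 s ⊗ₜ[k] P3 s) = (1 : A) ⊗ₜ[k] (1 : H)
  rca4b : ∑ s ∈ range nP, QB.counit (P3 s) • (P1 s ⊗ₜ[k] P2 s) = (1 : A) ⊗ₜ[k] (1 : H)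

/-- A left `H`-comodule algebra over a quasi-bialgebra, with Sweedler families. -/
structure LeftComoduleAlgebra {k : Type*} [Field k] {H : Type*} [Ring H] [Algebra k H]
    (QB : QuasiBialgebra k H) (B : Type*) [Ring B] [Algebra k B] where
  lam : B →ₐ[k] H ⊗[k] B
  nL : ℕ
  l1 : B → ℕ → H
  l0 : B → ℕ → B
  hlam : ∀ b, lam b = ∑ i ∈ range nL, l1 b i ⊗ₜ[k] l0 b i
  nP : ℕ
  P1 : ℕ → H
  P2 : ℕ → H
  P3 : ℕ → B
  nQ : ℕ
  Q1 : ℕ → H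
  Q2 : ℕ → H
  Q3 : ℕ → B
  P_inv : ∑ s ∈ range nP, ∑ q ∈ range nQ,
      (P1 s * Q1 q) ⊗ₜ[k] ((P2 s * Q2 q) ⊗ₜ[k] (P3 s * Q3 q)) =
      (1 : H) ⊗ₜ[k] ((1 : H) ⊗ₜ[k] (1 : B))
  inv_P : ∑ q ∈ range nQ, ∑ s ∈ range nP,
      (Q1 q * P1 s) ⊗ₜ[k] ((Q2 q * P2 s) ⊗ₜ[k] (Q3 q * P3 s)) =
      (1 : H) ⊗ₜ[k] ((1 : H) ⊗ₜ[k] (1 : B))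
  lca1 : ∀ b : B,
    ∑ i ∈ range nL, ∑ l ∈ range nL, ∑ s ∈ range nP,
      (l1 b i * P1 s) ⊗ₜ[k] ((l1 (l0 b i) l * P2 s) ⊗ₜ[k] (l0 (l0 b i) l * P3 s)) =
    ∑ s ∈ range nP, ∑ i ∈ range nL, ∑ l ∈ range QB.nD,
      (P1 s * QB.D1 (l1 b i) l) ⊗ₜ[k] ((P2 s * QB.D2 (l1 b i) l) ⊗ₜ[k] (P3 s * l0 b i))
  lca2 :
    ∑ p ∈ range nP, ∑ s ∈ range nP, ∑ l ∈ range QB.nD, ∑ r ∈ range QB.nP,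
      (P1 s * QB.X1 r) ⊗ₜ[k] ((P1 p * QB.D1 (P2 s) l * QB.X2 r) ⊗ₜ[k]
        ((P2 p * QB.D2 (P2 s) l * QB.X3 r) ⊗ₜ[k] (P3 p * P3 s))) =
    ∑ p ∈ range nP, ∑ s ∈ range nP, ∑ j ∈ range QB.nD, ∑ l ∈ range nL,
      (P1 p * QB.D1 (P1 s) j) ⊗ₜ[k] ((P2 p * QB.D2 (P1 s) j) ⊗ₜ[k]
        ((l1 (P3 p) l * P2 s) ⊗ₜ[k] (l0 (P3 p) l * P3 s)))
  lca3 : ∀ b, ∑ i ∈ range nL, QB.counit (l1 b i) • l0 b i = b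
  lca4a : ∑ s ∈ range nP, QB.counit (P2 s) • (P1 s ⊗ₜ[k] P3 s) = (1 : H) ⊗ₜ[k] (1 : B)
  lca4b : ∑ s ∈ range nP, QB.counit (P1 s) • (P2 s ⊗ₜ[k] P3 s) = (1 : H) ⊗ₜ[k] (1 : B)

/-- An algebra in the monoidal category of left `H`-modules
(a left `H`-module algebra), on a carrier `V`. -/
structure LeftModuleAlgebra {k : Type*} [Field k] {H : Type*} [Ring H] [Algebra k H]
    (QB : QuasiBialgebra k H) (V : Type*) [AddCommMonoid V] [Module k V] where
  mul : V →ₗ[k] V →ₗ[k] V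
  one : V
  act : H →ₗ[k] V →ₗ[k] V
  act_one : ∀ v, act 1 v = v
  act_mul : ∀ g h v, act (g * h) v = act g (act h v)
  mul_one : ∀ v, mul v one = v
  one_mul : ∀ v, mul one v = v
  mul_assoc : ∀ u v w, mul (mul u v) w =
    ∑ s ∈ range QB.nP, mul (act (QB.X1 s) u) (mul (act (QB.X2 s) v) (act (QB.X3 s) w))
  act_mul_mul : ∀ h u v, act h (mul u v) =
    ∑ i ∈ range QB.nD, mul (act (QB.D1 h i) u) (act (QB.D2 h i) v)
  act_unit : ∀ h, act h one = QB.counit h • one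

/-- The right action `φ ↦ h ⇀ φ`, `(h ⇀ φ)(h') = φ(h'h)`. -/
def rA (k : Type*) [Field k] {H : Type*} [Ring H] [Algebra k H] (h : H) :
    Module.Dual k H →ₗ[k] Module.Dual k H :=
  LinearMap.lcomp k k (LinearMap.mulRight k h)

/-- The left action `φ ↦ φ ↼ h`, `(φ ↼ h)(h') = φ(hh')`. -/
def lA (k : Type*) [Field k] {H : Type*} [Ring H] [Algebra k H] (h : H) :
    Module.Dual k H →ₗ[k] Module.Dual k H :=
  LinearMap.lcomp k k (LinearMap.mulLeft k h)

/-- Convolution product on the dual of a "coalgebra" with comultiplication `DC`. -/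
def convC {k : Type*} [Field k] {C : Type*} [AddCommGroup C] [Module k C]
    (DC : C →ₗ[k] C ⊗[k] C) (φ ψ : Module.Dual k C) : Module.Dual k C :=
  (TensorProduct.lid k k).toLinearMap ∘ₗ (TensorProduct.map φ ψ) ∘ₗ DC

/-- A two-sided `(𝔄, H)`-Hopf module. -/
structure TwoSidedHopfModule {k : Type*} [Field k] {H : Type*} [Ring H] [Algebra k H]
    (QB : QuasiBialgebra k H) {A : Type*} [Ring A] [Algebra k A]
    (CA : RightComoduleAlgebra QB A) (M : Type*) [AddCommGroup M] [Module k M] where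
  ha : H →ₗ[k] M →ₗ[k] M
  ha_one : ∀ m, ha 1 m = m
  ha_mul : ∀ g h m, ha (g * h) m = ha g (ha h m)
  ra : A →ₗ[k] M →ₗ[k] M
  ra_one : ∀ m, ra 1 m = m
  ra_mul : ∀ a b m, ra (a * b) m = ra b (ra a m)
  ha_ra : ∀ h a m, ha h (ra a m) = ra a (ha h m)
  rho : M →ₗ[k] M ⊗[k] H
  counit_rho : ∀ m,
    (TensorProduct.rid k M) ((TensorProduct.map LinearMap.id QB.counit.toLinearMap) (rho m)) = m
  coassoc_rho : ∀ m,
    ∑ s ∈ range QB.nP,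
      (TensorProduct.map (ha (QB.X1 s))
        (TensorProduct.map (LinearMap.mulLeft k (QB.X2 s)) (LinearMap.mulLeft k (QB.X3 s))))
        ((TensorProduct.assoc k M H H) ((TensorProduct.map rho LinearMap.id) (rho m))) =
    ∑ j ∈ range CA.nP,
      (TensorProduct.map (ra (CA.P1 j))
        (TensorProduct.map (LinearMap.mulRight k (CA.P2 j)) (LinearMap.mulRight k (CA.P3 j))))
        ((TensorProduct.map LinearMap.id QB.comul.toLinearMap) (rho m))
  colin_l : ∀ h m, rho (ha h m) =
    ∑ i ∈ range QB.nD,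
      (TensorProduct.map (ha (QB.D1 h i)) (LinearMap.mulLeft k (QB.D2 h i))) (rho m)
  colin_r : ∀ a m, rho (ra a m) =
    ∑ i ∈ range CA.nR,
      (TensorProduct.map (ra (CA.r0 a i)) (LinearMap.mulRight k (CA.r1 a i))) (rho m)

/-- A right `(H^*, A)`-Hopf module over a left `H`-module algebra `A` (carrier `V`). -/
structure RelHopfModule {k : Type*} [Field k] {H : Type*} [Ring H] [Algebra k H]
    (QB : QuasiBialgebra k H) {V : Type*} [AddCommMonoid V] [Module k V]
    (MA : LeftModuleAlgebra QB V) (M : Type*) [AddCommGroup M] [Module k M] where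
  hb : H →ₗ[k] M →ₗ[k] M
  hb_one : ∀ m, hb 1 m = m
  hb_mul : ∀ g h m, hb (g * h) m = hb g (hb h m)
  rb : V →ₗ[k] M →ₗ[k] M
  rb_one : ∀ m, rb MA.one m = m
  rb_assoc : ∀ m u v, rb v (rb u m) =
    ∑ s ∈ range QB.nP, rb (MA.mul (MA.act (QB.X2 s) u) (MA.act (QB.X3 s) v)) (hb (QB.X1 s) m)
  hb_rb : ∀ h u m, hb h (rb u m) =
    ∑ i ∈ range QB.nD, rb (MA.act (QB.D2 h i) u) (hb (QB.D1 h i) m)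

/-- A right module over the (possibly nonassociative) algebra `(V, mul, one)`. -/
structure RightAlgModule (k : Type*) [Field k] {V : Type*} [AddCommMonoid V] [Module k V]
    (mul : V →ₗ[k] V →ₗ[k] V) (one : V) (N : Type*) [AddCommGroup N] [Module k N] where
  ract : V →ₗ[k] N →ₗ[k] N
  ract_one : ∀ n, ract one n = n
  ract_mul : ∀ u v n, ract (mul u v) n = ract v (ract u n)

/-- A left `H'`-comodule algebra structure on a carrier `V` equipped with a
(bilinear, possibly nonassociative) multiplication `mulV` and unit `oneV`. -/
structure LeftComoduleAlgebraS {k : Type*} [Field k] {H' : Type*} [Ring H'] [Algebra k H']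
    (QB : QuasiBialgebra k H') (V : Type*) [AddCommMonoid V] [Module k V]
    (mulV : V →ₗ[k] V →ₗ[k] V) (oneV : V) where
  lam : V →ₗ[k] H' ⊗[k] V
  nL : ℕ
  l1 : V → ℕ → H'
  l0 : V → ℕ → V
  hlam : ∀ v, lam v = ∑ i ∈ range nL, l1 v i ⊗ₜ[k] l0 v i
  lam_one : lam oneV = (1 : H') ⊗ₜ[k] oneV
  lam_mul : ∀ u v, lam (mulV u v) =
    ∑ i ∈ range nL, ∑ j ∈ range nL, (l1 u i * l1 v j) ⊗ₜ[k] mulV (l0 u i) (l0 v j)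
  nP : ℕ
  P1 : ℕ → H'
  P2 : ℕ → H'
  P3 : ℕ → V
  nQ : ℕ
  Q1 : ℕ → H'
  Q2 : ℕ → H'
  Q3 : ℕ → V
  P_inv : ∑ s ∈ range nP, ∑ q ∈ range nQ,
      (P1 s * Q1 q) ⊗ₜ[k] ((P2 s * Q2 q) ⊗ₜ[k] mulV (P3 s) (Q3 q)) =
      (1 : H') ⊗ₜ[k] ((1 : H') ⊗ₜ[k] oneV)
  inv_P : ∑ q ∈ range nQ, ∑ s ∈ range nP,
      (Q1 q * P1 s) ⊗ₜ[k] ((Q2 q * P2 s) ⊗ₜ[k] mulV (Q3 q) (P3 s)) =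
      (1 : H') ⊗ₜ[k] ((1 : H') ⊗ₜ[k] oneV)
  lca1 : ∀ v : V,
    ∑ i ∈ range nL, ∑ l ∈ range nL, ∑ s ∈ range nP,
      (l1 v i * P1 s) ⊗ₜ[k] ((l1 (l0 v i) l * P2 s) ⊗ₜ[k] mulV (l0 (l0 v i) l) (P3 s)) =
    ∑ s ∈ range nP, ∑ i ∈ range nL, ∑ l ∈ range QB.nD,
      (P1 s * QB.D1 (l1 v i) l) ⊗ₜ[k] ((P2 s * QB.D2 (l1 v i) l) ⊗ₜ[k] mulV (P3 s) (l0 v i))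
  lca2 :
    ∑ p ∈ range nP, ∑ s ∈ range nP, ∑ l ∈ range QB.nD, ∑ r ∈ range QB.nP,
      (P1 s * QB.X1 r) ⊗ₜ[k] ((P1 p * QB.D1 (P2 s) l * QB.X2 r) ⊗ₜ[k]
        ((P2 p * QB.D2 (P2 s) l * QB.X3 r) ⊗ₜ[k] mulV (P3 p) (P3 s))) =
    ∑ p ∈ range nP, ∑ s ∈ range nP, ∑ j ∈ range QB.nD, ∑ l ∈ range nL,
      (P1 p * QB.D1 (P1 s) j) ⊗ₜ[k] ((P2 p * QB.D2 (P1 s) j) ⊗ₜ[k]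
        ((l1 (P3 p) l * P2 s) ⊗ₜ[k] mulV (l0 (P3 p) l) (P3 s)))
  lca3 : ∀ v, ∑ i ∈ range nL, QB.counit (l1 v i) • l0 v i = v
  lca4a : ∑ s ∈ range nP, QB.counit (P2 s) • (P1 s ⊗ₜ[k] P3 s) = (1 : H') ⊗ₜ[k] oneV
  lca4b : ∑ s ∈ range nP, QB.counit (P1 s) • (P2 s ⊗ₜ[k] P3 s) = (1 : H') ⊗ₜ[k] oneV

/-- A right-left Doi-Hopf module over the quasi-bialgebra `QB'`, a left comodule
algebra (given by its carrier `V`, multiplication data and coaction families) and a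
module coalgebra `C` (given by its comultiplication `DC`, counit `eC` and right
`H'`-action `actC`). -/
structure DoiHopfModule {k : Type*} [Field k] {H' : Type*} [Ring H'] [Algebra k H']
    (QB' : QuasiBialgebra k H') {V : Type*} [AddCommMonoid V] [Module k V]
    (mulV : V →ₗ[k] V →ₗ[k] V) (oneV : V)
    (nL : ℕ) (l1 : V → ℕ → H') (l0 : V → ℕ → V)
    (nPl : ℕ) (Pl1 Pl2 : ℕ → H') (Pl3 : ℕ → V)
    {C : Type*} [AddCommGroup C] [Module k C]
    (DC : C →ₗ[k] C ⊗[k] C) (eC : C →ₗ[k] k) (actC : H' →ₗ[k] C →ₗ[k] C)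
    (N : Type*) [AddCommGroup N] [Module k N] where
  ract : V →ₗ[k] N →ₗ[k] N
  ract_one : ∀ n, ract oneV n = n
  ract_mul : ∀ u v n, ract (mulV u v) n = ract v (ract u n)
  rhoN : N →ₗ[k] C ⊗[k] N
  dh2 : ∀ n, (TensorProduct.lid k N) ((TensorProduct.map eC LinearMap.id) (rhoN n)) = n
  dh1 : ∀ n,
    (TensorProduct.assoc k C C N) ((TensorProduct.map DC LinearMap.id) (rhoN n)) =
    ∑ j ∈ range nPl,
      (TensorProduct.map (actC (Pl1 j)) (TensorProduct.map (actC (Pl2 j)) (ract (Pl3 j))))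
        ((TensorProduct.map LinearMap.id rhoN) (rhoN n))
  dh3 : ∀ v n, rhoN (ract v n) =
    ∑ w ∈ range nL, (TensorProduct.map (actC (l1 v w)) (ract (l0 v w))) (rhoN n)

/-- A right `H`-module coalgebra, with Sweedler families for the comultiplication. -/
structure RightModuleCoalgebra {k : Type*} [Field k] {H : Type*} [Ring H] [Algebra k H]
    (QB : QuasiBialgebra k H) (C : Type*) [AddCommGroup C] [Module k C] where
  act : H →ₗ[k] C →ₗ[k] C
  act_one : ∀ c, act 1 c = c
  act_mul : ∀ g h c, act (g * h) c = act h (act g c)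
  DC : C →ₗ[k] C ⊗[k] C
  nC : ℕ
  C1 : C → ℕ → C
  C2 : C → ℕ → C
  hDC : ∀ c, DC c = ∑ i ∈ range nC, C1 c i ⊗ₜ[k] C2 c i
  eC : C →ₗ[k] k
  counit_l : ∀ c, ∑ i ∈ range nC, eC (C1 c i) • C2 c i = c
  counit_r : ∀ c, ∑ i ∈ range nC, eC (C2 c i) • C1 c i = c
  rmc1 : ∀ c : C,
    ∑ i ∈ range nC, ∑ j ∈ range nC, ∑ q ∈ range QB.nQ,
      act (QB.x1 q) (C1 (C1 c i) j) ⊗ₜ[k]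
        (act (QB.x2 q) (C2 (C1 c i) j) ⊗ₜ[k] act (QB.x3 q) (C2 c i)) =
    ∑ i ∈ range nC, ∑ j ∈ range nC,
      C1 c i ⊗ₜ[k] (C1 (C2 c i) j ⊗ₜ[k] C2 (C2 c i) j)
  rmc2 : ∀ c h,
    ∑ i ∈ range nC, C1 (act h c) i ⊗ₜ[k] C2 (act h c) i =
    ∑ i ∈ range nC, ∑ l ∈ range QB.nD,
      act (QB.D1 h l) (C1 c i) ⊗ₜ[k] act (QB.D2 h l) (C2 c i)
  rmc3 : ∀ c h, eC (act h c) = eC c * QB.counit h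

/-- An `H`-bimodule coalgebra: a coalgebra in the monoidal category of
`(H,H)`-bimodules, with Sweedler families. -/
structure HBimoduleCoalgebra {k : Type*} [Field k] {H : Type*} [Ring H] [Algebra k H]
    (QB : QuasiBialgebra k H) (C : Type*) [AddCommGroup C] [Module k C] where
  lact : H →ₗ[k] C →ₗ[k] C
  lact_one : ∀ c, lact 1 c = c
  lact_mul : ∀ g h c, lact (g * h) c = lact g (lact h c)
  ract : H →ₗ[k] C →ₗ[k] C
  ract_one : ∀ c, ract 1 c = c
  ract_mul : ∀ g h c, ract (g * h) c = ract h (ract g c)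
  lact_ract : ∀ g h c, lact g (ract h c) = ract h (lact g c)
  DC : C →ₗ[k] C ⊗[k] C
  nC : ℕ
  C1 : C → ℕ → C
  C2 : C → ℕ → C
  hDC : ∀ c, DC c = ∑ i ∈ range nC, C1 c i ⊗ₜ[k] C2 c i
  eC : C →ₗ[k] k
  counit_l : ∀ c, ∑ i ∈ range nC, eC (C1 c i) • C2 c i = c
  counit_r : ∀ c, ∑ i ∈ range nC, eC (C2 c i) • C1 c i = c
  bmc1 : ∀ c : C,
    ∑ s ∈ range QB.nP, ∑ i ∈ range nC, ∑ j ∈ range nC, ∑ q ∈ range QB.nQ,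
      lact (QB.X1 s) (ract (QB.x1 q) (C1 (C1 c i) j)) ⊗ₜ[k]
        (lact (QB.X2 s) (ract (QB.x2 q) (C2 (C1 c i) j)) ⊗ₜ[k]
          lact (QB.X3 s) (ract (QB.x3 q) (C2 c i))) =
    ∑ i ∈ range nC, ∑ j ∈ range nC,
      C1 c i ⊗ₜ[k] (C1 (C2 c i) j ⊗ₜ[k] C2 (C2 c i) j)
  bmc2l : ∀ c h,
    ∑ i ∈ range nC, C1 (lact h c) i ⊗ₜ[k] C2 (lact h c) i =
    ∑ l ∈ range QB.nD, ∑ i ∈ range nC,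
      lact (QB.D1 h l) (C1 c i) ⊗ₜ[k] lact (QB.D2 h l) (C2 c i)
  bmc2r : ∀ c h,
    ∑ i ∈ range nC, C1 (ract h c) i ⊗ₜ[k] C2 (ract h c) i =
    ∑ l ∈ range QB.nD, ∑ i ∈ range nC,
      ract (QB.D1 h l) (C1 c i) ⊗ₜ[k] ract (QB.D2 h l) (C2 c i)
  bmc3l : ∀ c h, eC (lact h c) = QB.counit h * eC c
  bmc3r : ∀ c h, eC (ract h c) = eC c * QB.counit h

/-- An `H`-bicomodule algebra `(𝔸, λ, ρ, Φ_λ, Φ_ρ, Φ_{λ,ρ})`. -/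
structure BicomoduleAlgebra {k : Type*} [Field k] {H : Type*} [Ring H] [Algebra k H]
    (QB : QuasiBialgebra k H) (A : Type*) [Ring A] [Algebra k A] where
  rca : RightComoduleAlgebra QB A
  lca : LeftComoduleAlgebra QB A
  nO : ℕ
  O1 : ℕ → H
  O2 : ℕ → A
  O3 : ℕ → H
  nW : ℕ
  w1 : ℕ → H
  w2 : ℕ → A
  w3 : ℕ → H
  O_inv : ∑ v ∈ range nO, ∑ w ∈ range nW,
      (O1 v * w1 w) ⊗ₜ[k] ((O2 v * w2 w) ⊗ₜ[k] (O3 v * w3 w)) =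
      (1 : H) ⊗ₜ[k] ((1 : A) ⊗ₜ[k] (1 : H))
  inv_O : ∑ w ∈ range nW, ∑ v ∈ range nO,
      (w1 w * O1 v) ⊗ₜ[k] ((w2 w * O2 v) ⊗ₜ[k] (w3 w * O3 v)) =
      (1 : H) ⊗ₜ[k] ((1 : A) ⊗ₜ[k] (1 : H))
  bca1 : ∀ a : A,
    ∑ v ∈ range nO, ∑ r ∈ range rca.nR, ∑ l ∈ range lca.nL,
      (O1 v * lca.l1 (rca.r0 a r) l) ⊗ₜ[k]
        ((O2 v * lca.l0 (rca.r0 a r) l) ⊗ₜ[k] (O3 v * rca.r1 a r)) =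
    ∑ l ∈ range lca.nL, ∑ r ∈ range rca.nR, ∑ v ∈ range nO,
      (lca.l1 a l * O1 v) ⊗ₜ[k]
        ((rca.r0 (lca.l0 a l) r * O2 v) ⊗ₜ[k] (rca.r1 (lca.l0 a l) r * O3 v))
  bca2 :
    ∑ v ∈ range nO, ∑ v' ∈ range nO, ∑ l ∈ range lca.nL, ∑ j ∈ range lca.nP,
      (O1 v' * lca.P1 j) ⊗ₜ[k] ((O1 v * lca.l1 (O2 v') l * lca.P2 j) ⊗ₜ[k]
        ((O2 v * lca.l0 (O2 v') l * lca.P3 j) ⊗ₜ[k] (O3 v * O3 v'))) =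
    ∑ j ∈ range lca.nP, ∑ v ∈ range nO, ∑ i ∈ range QB.nD, ∑ r ∈ range rca.nR,
      (lca.P1 j * QB.D1 (O1 v) i) ⊗ₜ[k] ((lca.P2 j * QB.D2 (O1 v) i) ⊗ₜ[k]
        ((rca.r0 (lca.P3 j) r * O2 v) ⊗ₜ[k] (rca.r1 (lca.P3 j) r * O3 v)))
  bca3 :
    ∑ s ∈ range rca.nP, ∑ v ∈ range nO, ∑ r ∈ range rca.nR, ∑ v' ∈ range nO,
      (O1 v * O1 v') ⊗ₜ[k] ((rca.P1 s * rca.r0 (O2 v) r * O2 v') ⊗ₜ[k]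
        ((rca.P2 s * rca.r1 (O2 v) r * O3 v') ⊗ₜ[k] (rca.P3 s * O3 v))) =
    ∑ v ∈ range nO, ∑ i ∈ range QB.nD, ∑ s ∈ range rca.nP, ∑ l ∈ range lca.nL,
      (O1 v * lca.l1 (rca.P1 s) l) ⊗ₜ[k] ((O2 v * lca.l0 (rca.P1 s) l) ⊗ₜ[k]
        ((QB.D1 (O3 v) i * rca.P2 s) ⊗ₜ[k] (QB.D2 (O3 v) i * rca.P3 s)))

/-- A two-sided two-cosided `(H, 𝔸, C)`-Hopf module. -/
structure TwoSidedTwoCosided {k : Type*} [Field k] {H : Type*} [Ring H] [Algebra k H]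
    (QB : QuasiBialgebra k H) {A : Type*} [Ring A] [Algebra k A]
    (BA : BicomoduleAlgebra QB A) {C : Type*} [AddCommGroup C] [Module k C]
    (lactC ractC : H →ₗ[k] C →ₗ[k] C) (DC : C →ₗ[k] C ⊗[k] C) (eC : C →ₗ[k] k)
    (N : Type*) [AddCommGroup N] [Module k N]
    extends TwoSidedHopfModule QB BA.rca N where
  rhoC : N →ₗ[k] C ⊗[k] N
  counit_rhoC : ∀ n,
    (TensorProduct.lid k N) ((TensorProduct.map eC LinearMap.id) (rhoC n)) = n
  tstc1 : ∀ n,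
    ∑ s ∈ range QB.nP,
      (TensorProduct.map (lactC (QB.X1 s))
        (TensorProduct.map (lactC (QB.X2 s)) (ha (QB.X3 s))))
        ((TensorProduct.assoc k C C N) ((TensorProduct.map DC LinearMap.id) (rhoC n))) =
    ∑ j ∈ range BA.lca.nP,
      (TensorProduct.map (ractC (BA.lca.P1 j))
        (TensorProduct.map (ractC (BA.lca.P2 j)) (ra (BA.lca.P3 j))))
        ((TensorProduct.map LinearMap.id rhoC) (rhoC n))
  tstc2 : ∀ n,
    ∑ s ∈ range QB.nP,
      (TensorProduct.map (lactC (QB.X1 s))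
        (TensorProduct.map (ha (QB.X2 s)) (LinearMap.mulLeft k (QB.X3 s))))
        ((TensorProduct.assoc k C N H) ((TensorProduct.map rhoC LinearMap.id) (rho n))) =
    ∑ v ∈ range BA.nO,
      (TensorProduct.map (ractC (BA.O1 v))
        (TensorProduct.map (ra (BA.O2 v)) (LinearMap.mulRight k (BA.O3 v))))
        ((TensorProduct.map LinearMap.id rho) (rhoC n))
  tstc3 : ∀ h n, rhoC (ha h n) =
    ∑ i ∈ range QB.nD,
      (TensorProduct.map (lactC (QB.D1 h i)) (ha (QB.D2 h i))) (rhoC n)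
  tstc4 : ∀ a n, rhoC (ra a n) =
    ∑ l ∈ range BA.lca.nL,
      (TensorProduct.map (ractC (BA.lca.l1 a l)) (ra (BA.lca.l0 a l))) (rhoC n)

/-!
The element `θ(a ⊗ h)` is obtained from `ρ(a) p̃ (1 ⊗ S h)` by
exchanging the two legs and applying `S⁻¹` to the leg in `H`. Call the element
`ρ(a) p̃ (1 ⊗ S h)` the conjugate of `a ⊗ h`. The axioms of `Φ_ρ` and of the antipode show that
multiplying `t` on the right by `ρ(a)` multiplies the conjugate of `t` on the right by `a ⊗ 1`,
with a dual statement for `θ⁻¹`; so bijectivity reduces to the two identities saying that the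
conjugate of `q̃` is `1` and that `θ⁻¹` sends the flip of `p̃` to `1`. Both come from the pentagon
for `Φ_ρ` by contracting its three legs in `H` with the antipode.

Colinearity is easier for `θ⁻¹`. Both coactions are compatible with the actions, so it is enough
to look at the generator `1 ⊗ 1` of `H ⊗ 𝔄`, and there it is the image of the pentagon for `Φ_ρ`
under a single linear map built from `q_L` and `f⁻¹`. Computing that image uses only
`f Δ(α) = γ` and `f Δ(S h) = (S ⊗ S)(Δᵒᵖ h) f`, and these are again consequences of the
conjugation identities, now for `H` regarded as a comodule algebra over itself.
-/

section ThetaIsomorphism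

set_option maxSynthPendingDepth 6

open Algebra.TensorProduct (includeLeft includeRight tmul_mul_tmul one_def)

/-! ### Maps acting on single tensor legs -/

section TensorLegs

variable {k : Type*} [CommSemiring k] {A : Type*} [Semiring A] [Algebra k A]
  {H : Type*} [Semiring H] [Algebra k H] {C : Type*} [Semiring C] [Algebra k C]

variable (A) in
/-- The algebra map `id ⊗ f`: Mathlib's `lTensor`, linear over the base `k` only. -/
abbrev idTensor {B : Type*} [Semiring B] [Algebra k B] (f : B →ₐ[k] C) :
    A ⊗[k] B →ₐ[k] A ⊗[k] C :=
  Algebra.TensorProduct.lTensor A f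

/-- The algebra map `δ ⊗ id`, with its values bracketed to the right. -/
def legOne (δ : A →ₐ[k] A ⊗[k] H) : A ⊗[k] C →ₐ[k] A ⊗[k] (H ⊗[k] C) :=
  (Algebra.TensorProduct.assoc k k k A H C).toAlgHom.comp
    (Algebra.TensorProduct.map δ (AlgHom.id k C))

variable (A) in
/-- The algebra map `id ⊗ δ ⊗ id`. -/
def legTwo (δ : H →ₐ[k] H ⊗[k] H) : A ⊗[k] (H ⊗[k] C) →ₐ[k] A ⊗[k] (H ⊗[k] (H ⊗[k] C)) :=
  idTensor A (legOne δ)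

variable (A) in
/-- The algebra map `id ⊗ id ⊗ δ`. -/
def legThree (δ : C →ₐ[k] C ⊗[k] C) : A ⊗[k] (H ⊗[k] C) →ₐ[k] A ⊗[k] (H ⊗[k] (C ⊗[k] C)) :=
  idTensor A (idTensor H δ)

variable (k A H C) in
/-- The algebra map `z ↦ z ⊗ 1`, with its values bracketed to the right. -/
def tensorOne : A ⊗[k] (H ⊗[k] H) →ₐ[k] A ⊗[k] (H ⊗[k] (H ⊗[k] C)) :=
  idTensor A (idTensor H includeLeft)

/-- The algebra map `ε ⊗ id`, with values in `C = k ⊗ C`. -/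
def counitLeft (ε : H →ₐ[k] k) : H ⊗[k] C →ₐ[k] C :=
  (Algebra.TensorProduct.lid k C).toAlgHom.comp (Algebra.TensorProduct.map ε (AlgHom.id k C))

/-- The algebra map `id ⊗ ε`, with values in `C = C ⊗ k`. -/
def counitRight (ε : H →ₐ[k] k) : C ⊗[k] H →ₐ[k] C :=
  (Algebra.TensorProduct.rid k k C).toAlgHom.comp (idTensor C ε)

/-- The algebra map `h ↦ ε(h) 1 ⊗ 1`, which takes the place of a comultiplication that an
antipode axiom has removed. -/
def unitCounit (ε : H →ₐ[k] k) : H →ₐ[k] H ⊗[k] H :=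
  (Algebra.ofId k (H ⊗[k] H)).comp ε

theorem unitCounit_apply (ε : H →ₐ[k] k) (h : H) :
    unitCounit ε h = ε h • (1 : H) ⊗ₜ[k] (1 : H) := by
  simp [unitCounit, Algebra.ofId_apply, Algebra.algebraMap_eq_smul_one, one_def]

section Evaluation

variable {ι : Type*} {s : Finset ι} {v w : ι → H} {δ : H →ₐ[k] H ⊗[k] H} {h : H}

theorem legOne_tmul_of_eq_sum {u : ι → A} {ρ : A →ₐ[k] A ⊗[k] H} {a : A}
    (hρ : ρ a = ∑ i ∈ s, u i ⊗ₜ[k] v i) (c : C) :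
    legOne ρ (a ⊗ₜ[k] c) = ∑ i ∈ s, u i ⊗ₜ[k] (v i ⊗ₜ[k] c) := by
  simp [legOne, hρ, sum_tmul]

theorem legTwo_tmul_of_eq_sum (hδ : δ h = ∑ i ∈ s, v i ⊗ₜ[k] w i) (a : A) (c : C) :
    legTwo A δ (a ⊗ₜ[k] (h ⊗ₜ[k] c)) = ∑ i ∈ s, a ⊗ₜ[k] (v i ⊗ₜ[k] (w i ⊗ₜ[k] c)) := by
  simp [legTwo, legOne_tmul_of_eq_sum hδ, tmul_sum]

theorem legThree_tmul_of_eq_sum (hδ : δ h = ∑ i ∈ s, v i ⊗ₜ[k] w i) (a : A) (c : C) :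
    legThree A δ (a ⊗ₜ[k] (c ⊗ₜ[k] h)) = ∑ i ∈ s, a ⊗ₜ[k] (c ⊗ₜ[k] (v i ⊗ₜ[k] w i)) := by
  simp [legThree, hδ, tmul_sum]

end Evaluation

@[simp]
theorem tensorOne_tmul (a : A) (b c : H) :
    tensorOne k A H C (a ⊗ₜ[k] (b ⊗ₜ[k] c)) = a ⊗ₜ[k] (b ⊗ₜ[k] (c ⊗ₜ[k] (1 : C))) := by
  simp [tensorOne]

@[simp]
theorem counitLeft_tmul (ε : H →ₐ[k] k) (h : H) (c : C) :
    counitLeft ε (h ⊗ₜ[k] c) = ε h • c := by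
  simp [counitLeft]

@[simp]
theorem counitRight_tmul (ε : H →ₐ[k] k) (c : C) (h : H) :
    counitRight ε (c ⊗ₜ[k] h) = ε h • c := by
  simp [counitRight]

@[simp]
theorem legOne_unitCounit_tmul (ε : H →ₐ[k] k) (h : H) (c : C) :
    legOne (unitCounit ε) (h ⊗ₜ[k] c) = ε h • (1 : H) ⊗ₜ[k] ((1 : H) ⊗ₜ[k] c) := by
  simp [legOne, unitCounit_apply, smul_tmul']

@[simp]
theorem legTwo_unitCounit_tmul (ε : H →ₐ[k] k) (a : A) (h : H) (c : C) :
    legTwo A (unitCounit ε) (a ⊗ₜ[k] (h ⊗ₜ[k] c)) =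
      ε h • a ⊗ₜ[k] ((1 : H) ⊗ₜ[k] ((1 : H) ⊗ₜ[k] c)) := by
  simp [legTwo]

@[simp]
theorem legThree_unitCounit_tmul (ε : C →ₐ[k] k) (a : A) (h : H) (c : C) :
    legThree A (unitCounit ε) (a ⊗ₜ[k] (h ⊗ₜ[k] c)) =
      ε c • a ⊗ₜ[k] (h ⊗ₜ[k] ((1 : C) ⊗ₜ[k] (1 : C))) := by
  simp [legThree, unitCounit_apply]

end TensorLegs

section TensorExt

variable {k : Type*} [CommSemiring k]
  {M₁ : Type*} [AddCommMonoid M₁] [Module k M₁] {M₂ : Type*} [AddCommMonoid M₂] [Module k M₂]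
  {M₃ : Type*} [AddCommMonoid M₃] [Module k M₃] {M₄ : Type*} [AddCommMonoid M₄] [Module k M₄]
  {N : Type*} [AddCommMonoid N] [Module k N]

theorem linearMap_ext_three {f g : M₁ ⊗[k] (M₂ ⊗[k] M₃) →ₗ[k] N}
    (h : ∀ a b c, f (a ⊗ₜ[k] (b ⊗ₜ[k] c)) = g (a ⊗ₜ[k] (b ⊗ₜ[k] c))) : f = g := by
  ext a b c
  exact h a b c

theorem linearMap_ext_four {f g : M₁ ⊗[k] (M₂ ⊗[k] (M₃ ⊗[k] M₄)) →ₗ[k] N}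
    (h : ∀ a b c d, f (a ⊗ₜ[k] (b ⊗ₜ[k] (c ⊗ₜ[k] d))) = g (a ⊗ₜ[k] (b ⊗ₜ[k] (c ⊗ₜ[k] d)))) :
    f = g := by
  ext a b c d
  exact h a b c d

end TensorExt

section MulExt

variable {k : Type*} [CommSemiring k] {N : Type*} [AddCommMonoid N] [Module k N]
  {A : Type*} [Semiring A] [Algebra k A] {B : Type*} [Semiring B] [Algebra k B]
  {C : Type*} [Semiring C] [Algebra k C] {D : Type*} [Semiring D] [Algebra k D]
  (L : A ⊗[k] (B ⊗[k] (C ⊗[k] D)) →ₗ[k] N)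
  {A' : Type*} [AddCommMonoid A'] [Module k A'] {B' : Type*} [AddCommMonoid B'] [Module k B']
  {C' : Type*} [AddCommMonoid C'] [Module k C']
  (φ ψ : A' ⊗[k] (B' ⊗[k] C') →ₗ[k] A ⊗[k] (B ⊗[k] (C ⊗[k] D)))

theorem apply_map_mul_eq_of_tmul
    (h : ∀ a b c a' b' c' d',
      L (φ (a ⊗ₜ[k] (b ⊗ₜ[k] c)) * a' ⊗ₜ[k] (b' ⊗ₜ[k] (c' ⊗ₜ[k] d'))) =
        L (ψ (a ⊗ₜ[k] (b ⊗ₜ[k] c)) * a' ⊗ₜ[k] (b' ⊗ₜ[k] (c' ⊗ₜ[k] d'))))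
    (z : A' ⊗[k] (B' ⊗[k] C')) (w : A ⊗[k] (B ⊗[k] (C ⊗[k] D))) :
    L (φ z * w) = L (ψ z * w) := by
  have bilinear_eq : (LinearMap.mul k _).compr₂ L ∘ₗ φ = (LinearMap.mul k _).compr₂ L ∘ₗ ψ :=
    linearMap_ext_three fun a b c => linearMap_ext_four fun a' b' c' d' => h a b c a' b' c' d'
  exact LinearMap.congr_fun (LinearMap.congr_fun bilinear_eq z) w

theorem apply_mul_map_eq_of_tmul
    (h : ∀ a b c a' b' c' d',
      L (a' ⊗ₜ[k] (b' ⊗ₜ[k] (c' ⊗ₜ[k] d')) * φ (a ⊗ₜ[k] (b ⊗ₜ[k] c))) =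
        L (a' ⊗ₜ[k] (b' ⊗ₜ[k] (c' ⊗ₜ[k] d')) * ψ (a ⊗ₜ[k] (b ⊗ₜ[k] c))))
    (z : A' ⊗[k] (B' ⊗[k] C')) (w : A ⊗[k] (B ⊗[k] (C ⊗[k] D))) :
    L (w * φ z) = L (w * ψ z) := by
  have bilinear_eq :
      (LinearMap.mul k _).flip.compr₂ L ∘ₗ φ = (LinearMap.mul k _).flip.compr₂ L ∘ₗ ψ :=
    linearMap_ext_three fun a b c => linearMap_ext_four fun a' b' c' d' => h a b c a' b' c' d'
  exact LinearMap.congr_fun (LinearMap.congr_fun bilinear_eq z) w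

end MulExt

namespace QuasiBialgebra

variable {k : Type*} [Field k] {H : Type*} [Ring H] [Algebra k H] (QB : QuasiBialgebra k H)

/-- The reassociator `Φ`, as a unit of `H ⊗ H ⊗ H`. -/
def reassoc : (H ⊗[k] (H ⊗[k] H))ˣ where
  val := ∑ s ∈ range QB.nP, QB.X1 s ⊗ₜ[k] (QB.X2 s ⊗ₜ[k] QB.X3 s)
  inv := ∑ q ∈ range QB.nQ, QB.x1 q ⊗ₜ[k] (QB.x2 q ⊗ₜ[k] QB.x3 q)
  val_inv := by
    simp only [Finset.sum_mul]
    simpa only [Finset.mul_sum, tmul_mul_tmul, one_def] using QB.P_inv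
  inv_val := by
    simp only [Finset.sum_mul]
    simpa only [Finset.mul_sum, tmul_mul_tmul, one_def] using QB.inv_P

theorem coe_reassoc :
    (QB.reassoc : H ⊗[k] (H ⊗[k] H)) =
      ∑ s ∈ range QB.nP, QB.X1 s ⊗ₜ[k] (QB.X2 s ⊗ₜ[k] QB.X3 s) :=
  rfl

theorem coe_reassoc_inv :
    (↑QB.reassoc⁻¹ : H ⊗[k] (H ⊗[k] H)) =
      ∑ q ∈ range QB.nQ, QB.x1 q ⊗ₜ[k] (QB.x2 q ⊗ₜ[k] QB.x3 q) :=
  rfl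

theorem semiconjBy_reassoc (h : H) :
    SemiconjBy (QB.reassoc : H ⊗[k] (H ⊗[k] H)) (legOne QB.comul (QB.comul h))
      (idTensor H QB.comul (QB.comul h)) := by
  have conj : idTensor H QB.comul (QB.comul h) =
      QB.reassoc * (legOne QB.comul (QB.comul h) * ↑QB.reassoc⁻¹) := by
    have coassoc := QB.coassoc h
    simp only [coe_reassoc, coe_reassoc_inv, QB.hcomul h, map_sum,
      legOne_tmul_of_eq_sum (QB.hcomul _), Algebra.TensorProduct.map_tmul, QB.hcomul, tmul_sum,
      AlgHom.coe_id, id_eq]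
    simp only [Finset.sum_mul]
    simp only [Finset.mul_sum, tmul_mul_tmul, ← mul_assoc]
    exact coassoc
  rw [← mul_assoc] at conj
  exact (Units.mul_inv_eq_iff_eq_mul _).mp conj.symm

theorem pentagon_reassoc :
    (1 : H) ⊗ₜ[k] (QB.reassoc : H ⊗[k] (H ⊗[k] H)) * legTwo H QB.comul QB.reassoc *
        tensorOne k H H H QB.reassoc =
      legThree H QB.comul QB.reassoc * legOne QB.comul (QB.reassoc : H ⊗[k] (H ⊗[k] H)) := by
  have pentagon := QB.pentagon
  simp only [coe_reassoc, map_sum, legOne_tmul_of_eq_sum (QB.hcomul _), tensorOne_tmul, tmul_sum,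
    legTwo_tmul_of_eq_sum (QB.hcomul _), legThree_tmul_of_eq_sum (QB.hcomul _), mul_assoc]
    at pentagon ⊢
  simp only [Finset.sum_mul]
  simp only [Finset.mul_sum, tmul_mul_tmul, one_mul, mul_one]
  rw [pentagon]
  exact Finset.sum_congr rfl fun _ _ => Finset.sum_comm

theorem counitLeft_comul (h : H) : counitLeft QB.counit (QB.comul h) = h := by
  simp [QB.hcomul, QB.counit_l]

section Counit

variable {C : Type*} [Semiring C] [Algebra k C]

theorem counitLeft_legOne_comul (z : H ⊗[k] C) :
    counitLeft QB.counit (legOne QB.comul z) = z := by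
  induction z with
  | zero => simp
  | add x y hx hy => simp only [map_add, hx, hy]
  | tmul h c =>
    simp only [legOne_tmul_of_eq_sum (QB.hcomul h), map_sum, counitLeft_tmul, smul_tmul',
      ← sum_tmul, QB.counit_l]

theorem idTensor_counitLeft_legOne_comul (z : H ⊗[k] C) :
    idTensor H (counitLeft QB.counit) (legOne QB.comul z) = z := by
  induction z with
  | zero => simp
  | add x y hx hy => simp only [map_add, hx, hy]
  | tmul h c =>
    simp only [legOne_tmul_of_eq_sum (QB.hcomul h), map_sum, Algebra.TensorProduct.map_tmul,
      counitLeft_tmul, tmul_smul, smul_tmul', ← sum_tmul, AlgHom.coe_id, id_eq, QB.counit_r]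

end Counit

theorem idTensor_counitLeft_reassoc :
    idTensor H (counitLeft QB.counit) (QB.reassoc : H ⊗[k] (H ⊗[k] H)) = 1 := by
  simp [coe_reassoc, one_def, ← QB.normal]

-- Apply `id ⊗ ε ⊗ id ⊗ id` to the pentagon and cancel `Φ`.
theorem counitLeft_reassoc : counitLeft QB.counit (QB.reassoc : H ⊗[k] (H ⊗[k] H)) = 1 := by
  have on_legTwo (z : H ⊗[k] (H ⊗[k] H)) :
      idTensor H (counitLeft QB.counit) (legTwo H QB.comul z) = z := by
    induction z with
    | zero => simp
    | add x y hx hy => simp only [map_add, hx, hy]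
    | tmul h c => simp [legTwo, counitLeft_legOne_comul]
  have on_tensorOne : idTensor H (counitLeft QB.counit)
      (tensorOne k H H H (QB.reassoc : H ⊗[k] (H ⊗[k] H))) = 1 := by
    rw [← map_one (idTensor H includeLeft), ← QB.idTensor_counitLeft_reassoc]
    simp [coe_reassoc]
  have on_legThree : idTensor H (counitLeft QB.counit)
      (legThree H QB.comul (QB.reassoc : H ⊗[k] (H ⊗[k] H))) = 1 := by
    rw [← map_one (idTensor H QB.comul), ← QB.idTensor_counitLeft_reassoc]
    simp [coe_reassoc, legThree]
  have pentagon := congrArg (idTensor H (counitLeft QB.counit)) QB.pentagon_reassoc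
  rw [map_mul, map_mul, map_mul, on_legTwo, on_tensorOne, on_legThree,
    idTensor_counitLeft_legOne_comul, mul_one, one_mul, QB.reassoc.isUnit.mul_eq_right] at pentagon
  simpa using congrArg (counitLeft QB.counit) pentagon

-- Apply `id ⊗ id ⊗ ε ⊗ id` to the pentagon and cancel `Φ`.
theorem idTensor_counitRight_reassoc :
    idTensor H (counitRight QB.counit) (QB.reassoc : H ⊗[k] (H ⊗[k] H)) = 1 := by
  have on_legTwo (z : H ⊗[k] (H ⊗[k] H)) :
      idTensor H (idTensor H (counitLeft QB.counit)) (legTwo H QB.comul z) = z := by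
    induction z with
    | zero => simp
    | add x y hx hy => simp only [map_add, hx, hy]
    | tmul h c => simp [legTwo, idTensor_counitLeft_legOne_comul]
  have on_legThree : idTensor H (idTensor H (counitLeft QB.counit))
      (legThree H QB.comul (QB.reassoc : H ⊗[k] (H ⊗[k] H))) = QB.reassoc := by
    simp [coe_reassoc, legThree, counitLeft_comul]
  have on_legOne : idTensor H (idTensor H (counitLeft QB.counit))
      (legOne QB.comul (QB.reassoc : H ⊗[k] (H ⊗[k] H))) = 1 := by
    rw [← map_one (legOne QB.comul), ← QB.idTensor_counitLeft_reassoc]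
    simp [coe_reassoc, legOne_tmul_of_eq_sum (QB.hcomul _), Finset.smul_sum]
  have pentagon := congrArg (idTensor H (idTensor H (counitLeft QB.counit))) QB.pentagon_reassoc
  rw [map_mul, map_mul, map_mul, on_legTwo, on_legOne, on_legThree, mul_one,
    Algebra.TensorProduct.map_tmul, idTensor_counitLeft_reassoc, map_one, ← one_def, one_mul,
    QB.reassoc.isUnit.mul_eq_left] at pentagon
  rw [← map_one (idTensor H (counitRight QB.counit)), ← pentagon]
  simp [coe_reassoc]

/-- The quasi-bialgebra `H` as a right comodule algebra over itself. -/
def regular : RightComoduleAlgebra QB H where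
  rho := QB.comul
  nR := QB.nD
  r0 := QB.D1
  r1 := QB.D2
  hrho := QB.hcomul
  nP := QB.nP
  P1 := QB.X1
  P2 := QB.X2
  P3 := QB.X3
  nQ := QB.nQ
  Q1 := QB.x1
  Q2 := QB.x2
  Q3 := QB.x3
  P_inv := QB.P_inv
  inv_P := QB.inv_P
  rca1 h := by
    have semiconj := (QB.semiconjBy_reassoc h).eq
    simp only [coe_reassoc, QB.hcomul h, map_sum, legOne_tmul_of_eq_sum (QB.hcomul _),
      Algebra.TensorProduct.map_tmul, QB.hcomul, tmul_sum, AlgHom.coe_id, id_eq,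
      Finset.sum_mul] at semiconj
    simpa only [Finset.mul_sum, tmul_mul_tmul] using semiconj
  rca2 := by
    rw [QB.pentagon]
    exact Finset.sum_congr rfl fun _ _ => Finset.sum_comm
  rca3 := QB.counit_r
  rca4a := QB.normal
  rca4b := by
    simpa [coe_reassoc, one_def] using QB.idTensor_counitRight_reassoc

end QuasiBialgebra

namespace RightComoduleAlgebra

variable {k : Type*} [Field k] {H : Type*} [Ring H] [Algebra k H] {QB : QuasiBialgebra k H}
  {A : Type*} [Ring A] [Algebra k A] (CA : RightComoduleAlgebra QB A)

/-- The reassociator `Φ_ρ`, as a unit of `𝔄 ⊗ H ⊗ H`. -/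
def reassoc : (A ⊗[k] (H ⊗[k] H))ˣ where
  val := ∑ s ∈ range CA.nP, CA.P1 s ⊗ₜ[k] (CA.P2 s ⊗ₜ[k] CA.P3 s)
  inv := ∑ q ∈ range CA.nQ, CA.Q1 q ⊗ₜ[k] (CA.Q2 q ⊗ₜ[k] CA.Q3 q)
  val_inv := by
    simp only [Finset.sum_mul]
    simpa only [Finset.mul_sum, tmul_mul_tmul, one_def] using CA.P_inv
  inv_val := by
    simp only [Finset.sum_mul]
    simpa only [Finset.mul_sum, tmul_mul_tmul, one_def] using CA.inv_P

theorem coe_reassoc :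
    (CA.reassoc : A ⊗[k] (H ⊗[k] H)) =
      ∑ s ∈ range CA.nP, CA.P1 s ⊗ₜ[k] (CA.P2 s ⊗ₜ[k] CA.P3 s) :=
  rfl

theorem coe_reassoc_inv :
    (↑CA.reassoc⁻¹ : A ⊗[k] (H ⊗[k] H)) =
      ∑ q ∈ range CA.nQ, CA.Q1 q ⊗ₜ[k] (CA.Q2 q ⊗ₜ[k] CA.Q3 q) :=
  rfl

theorem semiconjBy_reassoc (a : A) :
    SemiconjBy (CA.reassoc : A ⊗[k] (H ⊗[k] H)) (legOne CA.rho (CA.rho a))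
      (idTensor A QB.comul (CA.rho a)) := by
  have coassoc := CA.rca1 a
  simp only [SemiconjBy, coe_reassoc, CA.hrho a, map_sum, legOne_tmul_of_eq_sum (CA.hrho _),
    Algebra.TensorProduct.map_tmul, QB.hcomul, tmul_sum, AlgHom.coe_id, id_eq]
  simp only [Finset.sum_mul]
  simpa only [Finset.mul_sum, tmul_mul_tmul] using coassoc

theorem pentagon_reassoc :
    (1 : A) ⊗ₜ[k] (QB.reassoc : H ⊗[k] (H ⊗[k] H)) * legTwo A QB.comul CA.reassoc *
        tensorOne k A H H CA.reassoc =
      legThree A QB.comul CA.reassoc * legOne CA.rho (CA.reassoc : A ⊗[k] (H ⊗[k] H)) := by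
  have pentagon := CA.rca2
  simp only [coe_reassoc, QuasiBialgebra.coe_reassoc, map_sum, legOne_tmul_of_eq_sum (CA.hrho _),
    tensorOne_tmul, tmul_sum, legTwo_tmul_of_eq_sum (QB.hcomul _),
    legThree_tmul_of_eq_sum (QB.hcomul _), mul_assoc] at pentagon ⊢
  simp only [Finset.sum_mul]
  simpa only [Finset.mul_sum, tmul_mul_tmul, one_mul, mul_one] using pentagon

theorem counitRight_rho (a : A) : counitRight QB.counit (CA.rho a) = a := by
  simp [CA.hrho, CA.rca3]

theorem legTwo_unitCounit_reassoc :
    legTwo A (unitCounit QB.counit) (CA.reassoc : A ⊗[k] (H ⊗[k] H)) = 1 := by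
  have normal := congrArg (idTensor A (includeRight.comp includeRight :
    H →ₐ[k] H ⊗[k] (H ⊗[k] H))) CA.rca4a
  simpa [coe_reassoc, one_def] using normal

theorem legThree_unitCounit_reassoc :
    legThree A (unitCounit QB.counit) (CA.reassoc : A ⊗[k] (H ⊗[k] H)) = 1 := by
  have normal := congrArg (idTensor A (includeLeft : H →ₐ[k] H ⊗[k] (H ⊗[k] H))) CA.rca4b
  simpa [coe_reassoc, one_def] using normal

theorem map_reassoc_inv_eq_one {B : Type*} [Semiring B] [Algebra k B]
    {φ : A ⊗[k] (H ⊗[k] H) →ₐ[k] B} (h : φ CA.reassoc = 1) : φ ↑CA.reassoc⁻¹ = 1 := by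
  have mul_inv := map_mul φ (CA.reassoc : A ⊗[k] (H ⊗[k] H)) ↑CA.reassoc⁻¹
  rwa [Units.mul_inv, map_one, h, one_mul, eq_comm] at mul_inv

end RightComoduleAlgebra

section SwapMap

variable {k : Type*} [CommSemiring k] {H : Type*} [Semiring H] [Algebra k H] {σ τ : H →ₗ[k] H}

/-- The map `u ⊗ v ↦ σ(v) ⊗ σ(u)`, that is `(σ ⊗ σ)` after the flip, used for `σ = S, S⁻¹`. -/
def swapMap (σ : H →ₗ[k] H) : H ⊗[k] H →ₗ[k] H ⊗[k] H :=
  TensorProduct.map σ σ ∘ₗ (TensorProduct.comm k H H).toLinearMap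

@[simp]
theorem swapMap_tmul (u v : H) : swapMap σ (u ⊗ₜ[k] v) = σ v ⊗ₜ[k] σ u := by
  simp [swapMap]

theorem swapMap_one (hσ : σ 1 = 1) : swapMap σ 1 = 1 := by
  simp [one_def, hσ]

theorem swapMap_mul (hσ : ∀ g h, σ (g * h) = σ h * σ g) (x y : H ⊗[k] H) :
    swapMap σ (x * y) = swapMap σ y * swapMap σ x := by
  induction x with
  | zero => simp
  | add x x' hx hx' => simp [add_mul, mul_add, hx, hx']
  | tmul u v =>
    induction y with
    | zero => simp
    | add y y' hy hy' => simp [add_mul, mul_add, hy, hy']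
    | tmul u' v' => simp [hσ]

theorem swapMap_leftInverse (hστ : Function.LeftInverse σ τ) :
    Function.LeftInverse (swapMap σ) (swapMap τ) := by
  intro x
  induction x with
  | zero => simp
  | add x x' hx hx' => simp [hx, hx']
  | tmul u v => simp [hστ u, hστ v]

end SwapMap

/-! ### The antipode and the maps cutting Sweedler legs -/

namespace QuasiHopfAlgebra

variable {k : Type*} [Field k] {H : Type*} [Ring H] [Algebra k H] (QH : QuasiHopfAlgebra k H)

theorem Sinv_mul (g h : H) : QH.Sinv (g * h) = QH.Sinv h * QH.Sinv g := by
  rw [← QH.Sinv_S (QH.Sinv h * QH.Sinv g), QH.S_mul, QH.S_Sinv, QH.S_Sinv]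

theorem Sinv_one : QH.Sinv 1 = 1 := by
  rw [← QH.S_one, QH.Sinv_S, QH.S_one]

theorem sum_antipode_left_mul (h v : H) :
    ∑ i ∈ range QH.nD, QH.S (QH.D1 h i) * (QH.aE * (QH.D2 h i * v)) =
      QH.counit h • (QH.aE * v) := by
  rw [← smul_mul_assoc, ← QH.antip_l h]
  simp only [Finset.sum_mul, mul_assoc]

theorem sum_antipode_right_mul (h v : H) :
    ∑ i ∈ range QH.nD, QH.D1 h i * (QH.bE * (QH.S (QH.D2 h i) * v)) =
      QH.counit h • (QH.bE * v) := by
  rw [← smul_mul_assoc, ← QH.antip_r h]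
  simp only [Finset.sum_mul, mul_assoc]

/-- The map `b ⊗ c ↦ b β S(c)`, which cuts the last two legs of `p̃_ρ`. -/
def mulBeta : H ⊗[k] H →ₗ[k] H :=
  LinearMap.mul' k H ∘ₗ TensorProduct.map (LinearMap.mulRight k QH.bE) QH.S

/-- The map `b ⊗ c ↦ S⁻¹(α c) b`, which cuts the last two legs of `q̃_ρ`. -/
def mulSinvAlpha : H ⊗[k] H →ₗ[k] H :=
  LinearMap.mul' k H ∘ₗ
    TensorProduct.map (QH.Sinv ∘ₗ LinearMap.mulLeft k QH.aE) LinearMap.id ∘ₗ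
    (TensorProduct.comm k H H).toLinearMap

/-- The map `b ⊗ c ⊗ d ↦ b β S(c) α d` of the antipode axiom for `Φ`. -/
def mulBetaAlpha : H ⊗[k] (H ⊗[k] H) →ₗ[k] H :=
  LinearMap.mul' k H ∘ₗ TensorProduct.map QH.mulBeta (LinearMap.mulLeft k QH.aE) ∘ₗ
    (TensorProduct.assoc k H H H).symm.toLinearMap

/-- The map `b ⊗ c ⊗ d ↦ S(b) α c β S(d)` of the antipode axiom for `Φ⁻¹`. -/
def mulAlphaBeta : H ⊗[k] (H ⊗[k] H) →ₗ[k] H :=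
  LinearMap.mul' k H ∘ₗ TensorProduct.map (LinearMap.mulRight k QH.aE ∘ₗ QH.S) QH.mulBeta

@[simp]
theorem mulBeta_tmul (b c : H) : QH.mulBeta (b ⊗ₜ[k] c) = b * QH.bE * QH.S c := by
  simp [mulBeta]

@[simp]
theorem mulSinvAlpha_tmul (b c : H) :
    QH.mulSinvAlpha (b ⊗ₜ[k] c) = QH.Sinv (QH.aE * c) * b := by
  simp [mulSinvAlpha]

@[simp]
theorem mulBetaAlpha_tmul (b c d : H) :
    QH.mulBetaAlpha (b ⊗ₜ[k] (c ⊗ₜ[k] d)) = b * QH.bE * QH.S c * QH.aE * d := by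
  simp [mulBetaAlpha, mul_assoc]

@[simp]
theorem mulAlphaBeta_tmul (b c d : H) :
    QH.mulAlphaBeta (b ⊗ₜ[k] (c ⊗ₜ[k] d)) = QH.S b * QH.aE * c * QH.bE * QH.S d := by
  simp [mulAlphaBeta, mul_assoc]

theorem mulBetaAlpha_reassoc : QH.mulBetaAlpha (QH.reassoc : H ⊗[k] (H ⊗[k] H)) = 1 := by
  simp [QuasiBialgebra.coe_reassoc, QH.antip_X]

theorem mulAlphaBeta_reassoc_inv : QH.mulAlphaBeta ↑QH.reassoc⁻¹ = 1 := by
  simp [QuasiBialgebra.coe_reassoc_inv, QH.antip_x]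

theorem mulBeta_mul_comul (w : H ⊗[k] H) (h : H) :
    QH.mulBeta (w * QH.comul h) = QH.counit h • QH.mulBeta w := by
  induction w with
  | zero => simp
  | add x x' hx hx' => simp only [add_mul, map_add, hx, hx', smul_add]
  | tmul b c =>
    simp only [QH.hcomul, Finset.mul_sum, tmul_mul_tmul, map_sum, mulBeta_tmul, QH.S_mul,
      mul_assoc]
    rw [← Finset.mul_sum, QH.sum_antipode_right_mul, mul_smul_comm]

theorem mulSinvAlpha_comul_mul (h : H) (w : H ⊗[k] H) :
    QH.mulSinvAlpha (QH.comul h * w) = QH.counit h • QH.mulSinvAlpha w := by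
  induction w with
  | zero => simp
  | add x x' hx hx' => simp only [mul_add, map_add, hx, hx', smul_add]
  | tmul b c =>
    have antipode_left := congrArg QH.Sinv (QH.sum_antipode_left_mul h c)
    simp only [map_sum, map_smul] at antipode_left
    simp only [QH.hcomul, Finset.sum_mul, tmul_mul_tmul, map_sum, mulSinvAlpha_tmul]
    rw [← smul_mul_assoc, ← antipode_left, Finset.sum_mul]
    simp only [QH.Sinv_mul, QH.Sinv_S, mul_assoc]

section LTensor

variable {A : Type*} [Semiring A] [Algebra k A]

theorem lTensor_mulBeta_mul_comul (w : A ⊗[k] (H ⊗[k] H)) (t : A ⊗[k] H) :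
    QH.mulBeta.lTensor A (w * idTensor A QH.comul t) =
      QH.mulBeta.lTensor A w * counitRight QH.counit t ⊗ₜ[k] (1 : H) := by
  induction t with
  | zero => simp
  | add t t' ht ht' => simp only [map_add, mul_add, add_tmul, ht, ht']
  | tmul a h =>
    induction w with
    | zero => simp
    | add w w' hw hw' => simp only [add_mul, map_add, hw, hw']
    | tmul b z => simp [mulBeta_mul_comul, smul_tmul']

theorem lTensor_mulSinvAlpha_comul_mul (t : A ⊗[k] H) (w : A ⊗[k] (H ⊗[k] H)) :
    QH.mulSinvAlpha.lTensor A (idTensor A QH.comul t * w) =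
      counitRight QH.counit t ⊗ₜ[k] (1 : H) * QH.mulSinvAlpha.lTensor A w := by
  induction t with
  | zero => simp
  | add t t' ht ht' => simp only [map_add, add_mul, add_tmul, ht, ht']
  | tmul a h =>
    induction w with
    | zero => simp
    | add w w' hw hw' => simp only [mul_add, map_add, hw, hw']
    | tmul b z => simp [mulSinvAlpha_comul_mul, smul_tmul']

theorem lTensor_mulBetaAlpha_legThree_mul (z : A ⊗[k] (H ⊗[k] H))
    (w : A ⊗[k] (H ⊗[k] (H ⊗[k] H))) :
    QH.mulBetaAlpha.lTensor A (legThree A QH.comul z * w) =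
      QH.mulBetaAlpha.lTensor A (legThree A (unitCounit QH.counit) z * w) := by
  refine apply_map_mul_eq_of_tmul _ (legThree A QH.comul).toLinearMap
    (legThree A (unitCounit QH.counit)).toLinearMap (fun a b c a' b' c' d' => ?_) z w
  simp only [AlgHom.toLinearMap_apply, legThree_tmul_of_eq_sum (QH.hcomul _), Finset.sum_mul,
    map_sum, legThree_unitCounit_tmul, tmul_mul_tmul, LinearMap.lTensor_tmul, mulBetaAlpha_tmul,
    QH.S_mul, mul_assoc, smul_mul_assoc, map_smul, one_mul]
  simp only [← tmul_sum, ← Finset.mul_sum, QH.sum_antipode_left_mul, mul_smul_comm, tmul_smul]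

theorem lTensor_mulBetaAlpha_mul_legTwo (z : A ⊗[k] (H ⊗[k] H))
    (w : A ⊗[k] (H ⊗[k] (H ⊗[k] H))) :
    QH.mulBetaAlpha.lTensor A (w * legTwo A QH.comul z) =
      QH.mulBetaAlpha.lTensor A (w * legTwo A (unitCounit QH.counit) z) := by
  refine apply_mul_map_eq_of_tmul _ (legTwo A QH.comul).toLinearMap
    (legTwo A (unitCounit QH.counit)).toLinearMap (fun a b c a' b' c' d' => ?_) z w
  simp only [AlgHom.toLinearMap_apply, legTwo_tmul_of_eq_sum (QH.hcomul _), Finset.mul_sum,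
    map_sum, legTwo_unitCounit_tmul, tmul_mul_tmul, LinearMap.lTensor_tmul, mulBetaAlpha_tmul,
    QH.S_mul, mul_assoc, mul_smul_comm, map_smul]
  simp only [← tmul_sum, ← Finset.mul_sum, QH.sum_antipode_right_mul, QH.S_one, one_mul,
    mul_smul_comm, tmul_smul]

theorem lTensor_mulAlphaBeta_legTwo_mul (z : A ⊗[k] (H ⊗[k] H))
    (w : A ⊗[k] (H ⊗[k] (H ⊗[k] H))) :
    QH.mulAlphaBeta.lTensor A (legTwo A QH.comul z * w) =
      QH.mulAlphaBeta.lTensor A (legTwo A (unitCounit QH.counit) z * w) := by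
  refine apply_map_mul_eq_of_tmul _ (legTwo A QH.comul).toLinearMap
    (legTwo A (unitCounit QH.counit)).toLinearMap (fun a b c a' b' c' d' => ?_) z w
  simp only [AlgHom.toLinearMap_apply, legTwo_tmul_of_eq_sum (QH.hcomul _), Finset.sum_mul,
    map_sum, legTwo_unitCounit_tmul, tmul_mul_tmul, LinearMap.lTensor_tmul, mulAlphaBeta_tmul,
    QH.S_mul, mul_assoc, smul_mul_assoc, map_smul, ← tmul_sum, ← Finset.mul_sum,
    QH.sum_antipode_left_mul, one_mul, mul_smul_comm, tmul_smul]

theorem lTensor_mulAlphaBeta_mul_legThree (z : A ⊗[k] (H ⊗[k] H))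
    (w : A ⊗[k] (H ⊗[k] (H ⊗[k] H))) :
    QH.mulAlphaBeta.lTensor A (w * legThree A QH.comul z) =
      QH.mulAlphaBeta.lTensor A (w * legThree A (unitCounit QH.counit) z) := by
  refine apply_mul_map_eq_of_tmul _ (legThree A QH.comul).toLinearMap
    (legThree A (unitCounit QH.counit)).toLinearMap (fun a b c a' b' c' d' => ?_) z w
  simp only [AlgHom.toLinearMap_apply, legThree_tmul_of_eq_sum (QH.hcomul _), Finset.mul_sum,
    map_sum, legThree_unitCounit_tmul, tmul_mul_tmul, LinearMap.lTensor_tmul, mulAlphaBeta_tmul,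
    QH.S_mul, mul_assoc, mul_smul_comm, map_smul]
  simp only [← tmul_sum, ← Finset.mul_sum, QH.sum_antipode_right_mul, QH.S_one, one_mul,
    mul_smul_comm, tmul_smul]

variable (A) in
/-- The map `a ⊗ h ↦ S⁻¹(h) ⊗ a`, the flip in the definition of `θ`. -/
def flipSinv : A ⊗[k] H →ₗ[k] H ⊗[k] A :=
  (TensorProduct.comm k A H).toLinearMap ∘ₗ QH.Sinv.lTensor A

@[simp]
theorem flipSinv_tmul (a : A) (h : H) : QH.flipSinv A (a ⊗ₜ[k] h) = QH.Sinv h ⊗ₜ[k] a := by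
  simp [flipSinv]

theorem flipSinv_one : QH.flipSinv A 1 = 1 := by
  simp [one_def, QH.Sinv_one]

theorem flipSinv_mul_one_tmul_S (t : A ⊗[k] H) (h : H) :
    QH.flipSinv A (t * (1 : A) ⊗ₜ[k] QH.S h) = h ⊗ₜ[k] (1 : A) * QH.flipSinv A t := by
  induction t with
  | zero => simp
  | add x x' hx hx' => simp only [add_mul, mul_add, map_add, hx, hx']
  | tmul b c => simp [QH.Sinv_mul, QH.Sinv_S]

theorem flipSinv_mul_tmul_one (t : A ⊗[k] H) (a : A) :
    QH.flipSinv A (t * a ⊗ₜ[k] (1 : H)) = QH.flipSinv A t * (1 : H) ⊗ₜ[k] a := by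
  induction t with
  | zero => simp
  | add x x' hx hx' => simp only [add_mul, map_add, hx, hx']
  | tmul b c => simp

end LTensor

end QuasiHopfAlgebra

/-! ### The elements `p̃` and `q̃` and the map `θ` -/

namespace RightComoduleAlgebra

variable {k : Type*} [Field k] {H : Type*} [Ring H] [Algebra k H] {QH : QuasiHopfAlgebra k H}
  {A : Type*} [Ring A] [Algebra k A] (CA : RightComoduleAlgebra QH.toQuasiBialgebra A)

/-- The element `p̃_ρ = ∑ x̃¹ ⊗ x̃² β S(x̃³)`. -/
def pTilde : A ⊗[k] H :=
  QH.mulBeta.lTensor A ↑CA.reassoc⁻¹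

/-- The element `q̃_ρ = ∑ X̃¹ ⊗ S⁻¹(α X̃³) X̃²`. -/
def qTilde : A ⊗[k] H :=
  QH.mulSinvAlpha.lTensor A CA.reassoc

/-- The map `a ⊗ h ↦ ρ(a) p̃_ρ (1 ⊗ S(h))`, which is `θ` without its final flip. -/
def pConj : A ⊗[k] H →ₗ[k] A ⊗[k] H :=
  LinearMap.mul' k (A ⊗[k] H) ∘ₗ
    TensorProduct.map (LinearMap.mulRight k CA.pTilde ∘ₗ CA.rho.toLinearMap)
      ((includeRight : H →ₐ[k] A ⊗[k] H).toLinearMap ∘ₗ QH.S)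

/-- The map `θ(a ⊗ h) = ∑ h S⁻¹(a⟨1⟩ p̃²) ⊗ a⟨0⟩ p̃¹`. -/
def theta : A ⊗[k] H →ₗ[k] H ⊗[k] A :=
  QH.flipSinv A ∘ₗ CA.pConj

/-- The map `θ⁻¹(h ⊗ a) = ∑ q̃¹ a⟨0⟩ ⊗ h q̃² a⟨1⟩`. -/
def thetaInv : H ⊗[k] A →ₗ[k] A ⊗[k] H :=
  LinearMap.mul' k (A ⊗[k] H) ∘ₗ
    TensorProduct.map (includeRight : H →ₐ[k] A ⊗[k] H).toLinearMap
      (LinearMap.mulLeft k CA.qTilde ∘ₗ CA.rho.toLinearMap)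

theorem pConj_tmul (a : A) (h : H) :
    CA.pConj (a ⊗ₜ[k] h) = CA.rho a * CA.pTilde * (1 : A) ⊗ₜ[k] QH.S h := by
  simp [pConj]

theorem theta_tmul (a : A) (h : H) :
    CA.theta (a ⊗ₜ[k] h) = h ⊗ₜ[k] (1 : A) * QH.flipSinv A (CA.rho a * CA.pTilde) := by
  simp [theta, pConj_tmul, QH.flipSinv_mul_one_tmul_S]

theorem thetaInv_tmul (h : H) (a : A) :
    CA.thetaInv (h ⊗ₜ[k] a) = (1 : A) ⊗ₜ[k] h * CA.qTilde * CA.rho a := by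
  simp [thetaInv, mul_assoc]

theorem pConj_eq_lTensor_mulBeta (t : A ⊗[k] H) :
    CA.pConj t = QH.mulBeta.lTensor A (legOne CA.rho t * ↑CA.reassoc⁻¹) := by
  induction t with
  | zero => simp
  | add t t' ht ht' => simp only [map_add, add_mul, ht, ht']
  | tmul a h =>
    rw [pConj_tmul, pTilde, coe_reassoc_inv, legOne_tmul_of_eq_sum (CA.hrho a), CA.hrho a]
    simp only [Finset.sum_mul, map_sum, Finset.mul_sum, LinearMap.lTensor_tmul, tmul_mul_tmul,
      QH.mulBeta_tmul, QH.S_mul, mul_assoc, mul_one]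

theorem thetaInv_flipSinv (t : A ⊗[k] H) :
    CA.thetaInv (QH.flipSinv A t) =
      QH.mulSinvAlpha.lTensor A (CA.reassoc * legOne CA.rho t) := by
  induction t with
  | zero => simp
  | add t t' ht ht' => simp only [map_add, mul_add, ht, ht']
  | tmul a h =>
    rw [QH.flipSinv_tmul, thetaInv_tmul, qTilde, coe_reassoc,
      legOne_tmul_of_eq_sum (CA.hrho a), CA.hrho a]
    simp only [Finset.sum_mul, map_sum, Finset.mul_sum, LinearMap.lTensor_tmul, tmul_mul_tmul,
      QH.mulSinvAlpha_tmul, QH.Sinv_mul, mul_assoc, one_mul]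

theorem pConj_mul_rho (t : A ⊗[k] H) (a : A) :
    CA.pConj (t * CA.rho a) = CA.pConj t * a ⊗ₜ[k] (1 : H) := by
  rw [pConj_eq_lTensor_mulBeta, map_mul (legOne CA.rho), mul_assoc,
    ← (CA.semiconjBy_reassoc a).units_inv_symm_left.eq, ← mul_assoc, QH.lTensor_mulBeta_mul_comul,
    counitRight_rho, pConj_eq_lTensor_mulBeta]

theorem thetaInv_flipSinv_rho_mul (a : A) (t : A ⊗[k] H) :
    CA.thetaInv (QH.flipSinv A (CA.rho a * t)) =
      a ⊗ₜ[k] (1 : H) * CA.thetaInv (QH.flipSinv A t) := by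
  rw [thetaInv_flipSinv, map_mul (legOne CA.rho), ← mul_assoc, (CA.semiconjBy_reassoc a).eq,
    mul_assoc, QH.lTensor_mulSinvAlpha_comul_mul, counitRight_rho, thetaInv_flipSinv]

theorem pConj_one_tmul_mul (h : H) (t : A ⊗[k] H) :
    CA.pConj ((1 : A) ⊗ₜ[k] h * t) = CA.pConj t * (1 : A) ⊗ₜ[k] QH.S h := by
  induction t with
  | zero => simp
  | add t t' ht ht' => simp only [mul_add, add_mul, map_add, ht, ht']
  | tmul b c => simp [pConj_tmul, QH.S_mul, mul_assoc]

theorem theta_one_tmul_mul (h : H) (t : A ⊗[k] H) :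
    CA.theta ((1 : A) ⊗ₜ[k] h * t) = h ⊗ₜ[k] (1 : A) * CA.theta t := by
  simp only [theta, LinearMap.comp_apply, pConj_one_tmul_mul, QH.flipSinv_mul_one_tmul_S]

theorem theta_mul_rho (t : A ⊗[k] H) (a : A) :
    CA.theta (t * CA.rho a) = CA.theta t * (1 : H) ⊗ₜ[k] a := by
  simp only [theta, LinearMap.comp_apply, pConj_mul_rho, QH.flipSinv_mul_tmul_one]

theorem thetaInv_tmul_one_mul (h : H) (u : H ⊗[k] A) :
    CA.thetaInv (h ⊗ₜ[k] (1 : A) * u) = (1 : A) ⊗ₜ[k] h * CA.thetaInv u := by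
  induction u with
  | zero => simp
  | add u u' hu hu' => simp only [mul_add, map_add, hu, hu']
  | tmul b c => simp [thetaInv_tmul, ← mul_assoc]

theorem thetaInv_mul_one_tmul (u : H ⊗[k] A) (a : A) :
    CA.thetaInv (u * (1 : H) ⊗ₜ[k] a) = CA.thetaInv u * CA.rho a := by
  induction u with
  | zero => simp
  | add u u' hu hu' => simp only [add_mul, map_add, hu, hu']
  | tmul b c => simp [thetaInv_tmul, ← mul_assoc]

theorem legOne_reassoc_mul_tensorOne_inv :
    legOne CA.rho (CA.reassoc : A ⊗[k] (H ⊗[k] H)) * tensorOne k A H H ↑CA.reassoc⁻¹ =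
      legThree A QH.comul ↑CA.reassoc⁻¹ *
        ((1 : A) ⊗ₜ[k] (QH.reassoc : H ⊗[k] (H ⊗[k] H)) * legTwo A QH.comul CA.reassoc) := by
  apply (Units.mul_inv_eq_iff_eq_mul (Units.map (tensorOne k A H H).toMonoidHom CA.reassoc)).mpr
  rw [mul_assoc]
  exact (Units.eq_inv_mul_iff_mul_eq (Units.map (legThree A QH.comul).toMonoidHom CA.reassoc)).mpr
    CA.pentagon_reassoc.symm

theorem tensorOne_reassoc_mul_legOne_inv :
    tensorOne k A H H CA.reassoc * legOne CA.rho (↑CA.reassoc⁻¹ : A ⊗[k] (H ⊗[k] H)) =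
      legTwo A QH.comul ↑CA.reassoc⁻¹ *
        ((1 : A) ⊗ₜ[k] (↑QH.reassoc⁻¹ : H ⊗[k] (H ⊗[k] H)) * legThree A QH.comul CA.reassoc) := by
  apply (Units.mul_inv_eq_iff_eq_mul (Units.map (legOne CA.rho).toMonoidHom CA.reassoc)).mpr
  rw [mul_assoc, mul_assoc]
  apply (Units.eq_inv_mul_iff_mul_eq (Units.map (legTwo A QH.comul).toMonoidHom CA.reassoc)).mpr
  apply (Units.eq_inv_mul_iff_mul_eq (Units.map
    (includeRight : _ →ₐ[k] A ⊗[k] (H ⊗[k] (H ⊗[k] H))).toMonoidHom QH.reassoc)).mpr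
  rw [← mul_assoc]
  exact CA.pentagon_reassoc

theorem pConj_lTensor_mulSinvAlpha (z : A ⊗[k] (H ⊗[k] H)) :
    CA.pConj (QH.mulSinvAlpha.lTensor A z) =
      QH.mulBetaAlpha.lTensor A (legOne CA.rho z * tensorOne k A H H ↑CA.reassoc⁻¹) := by
  have ext : CA.pConj ∘ₗ QH.mulSinvAlpha.lTensor A =
      QH.mulBetaAlpha.lTensor A ∘ₗ LinearMap.mulRight k (tensorOne k A H H ↑CA.reassoc⁻¹) ∘ₗ
        (legOne CA.rho).toLinearMap := by
    refine linearMap_ext_three fun a b c => ?_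
    simpa [pConj_tmul, pTilde, coe_reassoc_inv, legOne_tmul_of_eq_sum (CA.hrho a), CA.hrho a,
      Finset.sum_mul, Finset.mul_sum, QH.S_mul, QH.S_Sinv, mul_assoc] using Finset.sum_comm
  exact LinearMap.congr_fun ext z

theorem pConj_qTilde : CA.pConj CA.qTilde = 1 := by
  rw [qTilde, pConj_lTensor_mulSinvAlpha, legOne_reassoc_mul_tensorOne_inv,
    QH.lTensor_mulBetaAlpha_legThree_mul,
    CA.map_reassoc_inv_eq_one CA.legThree_unitCounit_reassoc, one_mul,
    QH.lTensor_mulBetaAlpha_mul_legTwo, CA.legTwo_unitCounit_reassoc, mul_one,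
    LinearMap.lTensor_tmul, QH.mulBetaAlpha_reassoc, one_def]

theorem theta_qTilde : CA.theta CA.qTilde = 1 := by
  rw [theta, LinearMap.comp_apply, pConj_qTilde, QH.flipSinv_one]

theorem thetaInv_flipSinv_lTensor_mulBeta (z : A ⊗[k] (H ⊗[k] H)) :
    CA.thetaInv (QH.flipSinv A (QH.mulBeta.lTensor A z)) =
      QH.Sinv.lTensor A (QH.mulAlphaBeta.lTensor A
        (tensorOne k A H H CA.reassoc * legOne CA.rho z)) := by
  have ext : CA.thetaInv ∘ₗ QH.flipSinv A ∘ₗ QH.mulBeta.lTensor A =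
      QH.Sinv.lTensor A ∘ₗ QH.mulAlphaBeta.lTensor A ∘ₗ
        LinearMap.mulLeft k (tensorOne k A H H CA.reassoc) ∘ₗ (legOne CA.rho).toLinearMap := by
    refine linearMap_ext_three fun a b c => ?_
    simp [thetaInv_tmul, qTilde, coe_reassoc, legOne_tmul_of_eq_sum (CA.hrho a), CA.hrho a,
      Finset.sum_mul, Finset.mul_sum, QH.Sinv_mul, QH.Sinv_S, mul_assoc]
  exact LinearMap.congr_fun ext z

theorem thetaInv_flipSinv_pTilde : CA.thetaInv (QH.flipSinv A CA.pTilde) = 1 := by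
  rw [pTilde, thetaInv_flipSinv_lTensor_mulBeta, tensorOne_reassoc_mul_legOne_inv,
    QH.lTensor_mulAlphaBeta_legTwo_mul,
    CA.map_reassoc_inv_eq_one CA.legTwo_unitCounit_reassoc, one_mul,
    QH.lTensor_mulAlphaBeta_mul_legThree, CA.legThree_unitCounit_reassoc, mul_one,
    LinearMap.lTensor_tmul, QH.mulAlphaBeta_reassoc_inv, LinearMap.lTensor_tmul, QH.Sinv_one,
    one_def]

theorem thetaInv_theta (t : A ⊗[k] H) : CA.thetaInv (CA.theta t) = t := by
  induction t with
  | zero => simp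
  | add x x' hx hx' => simp only [map_add, hx, hx']
  | tmul a h =>
    rw [theta_tmul, thetaInv_tmul_one_mul, thetaInv_flipSinv_rho_mul, thetaInv_flipSinv_pTilde,
      mul_one, tmul_mul_tmul, one_mul, mul_one]

theorem theta_thetaInv (u : H ⊗[k] A) : CA.theta (CA.thetaInv u) = u := by
  induction u with
  | zero => simp
  | add x x' hx hx' => simp only [map_add, hx, hx']
  | tmul h a =>
    rw [thetaInv_tmul, theta_mul_rho, theta_one_tmul_mul, theta_qTilde,
      mul_one, tmul_mul_tmul, one_mul, mul_one]

theorem theta_tmul_eq_sum (a : A) (h : H) :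
    CA.theta (a ⊗ₜ[k] h) =
      ∑ r ∈ range CA.nR, ∑ j ∈ range CA.nQ,
        (h * QH.Sinv (CA.r1 a r * (CA.Q2 j * QH.bE * QH.S (CA.Q3 j)))) ⊗ₜ[k]
          (CA.r0 a r * CA.Q1 j) := by
  simpa [theta_tmul, CA.hrho a, pTilde, coe_reassoc_inv, Finset.sum_mul, Finset.mul_sum]
    using Finset.sum_comm

theorem thetaInv_tmul_eq_sum (h : H) (a : A) :
    CA.thetaInv (h ⊗ₜ[k] a) =
      ∑ s ∈ range CA.nP, ∑ r ∈ range CA.nR,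
        (CA.P1 s * CA.r0 a r) ⊗ₜ[k]
          (h * (QH.Sinv (QH.aE * CA.P3 s) * CA.P2 s) * CA.r1 a r) := by
  simp only [thetaInv_tmul, CA.hrho a, qTilde, coe_reassoc, mul_assoc, map_sum,
    LinearMap.lTensor_tmul, QH.mulSinvAlpha_tmul, Finset.sum_mul]
  simp only [Finset.mul_sum, tmul_mul_tmul, one_mul, mul_assoc]

end RightComoduleAlgebra

/-! ### The Drinfeld twist -/

namespace QuasiHopfAlgebra

variable {k : Type*} [Field k] {H : Type*} [Ring H] [Algebra k H] (QH : QuasiHopfAlgebra k H)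

theorem swapMap_S_mul (x y : H ⊗[k] H) :
    swapMap QH.S (x * y) = swapMap QH.S y * swapMap QH.S x :=
  swapMap_mul QH.S_mul x y

theorem swapMap_Sinv_mul_tmul (u v b c : H) (t : H ⊗[k] H) :
    swapMap QH.Sinv t * (u * b) ⊗ₜ[k] (v * c) =
      swapMap QH.Sinv (QH.S v ⊗ₜ[k] QH.S u * t) * b ⊗ₜ[k] c := by
  rw [swapMap_mul QH.Sinv_mul, mul_assoc, swapMap_tmul, QH.Sinv_S, QH.Sinv_S, tmul_mul_tmul]

/-- The map `a ⊗ b ⊗ c ⊗ d ↦ S(b) α c ⊗ S(a) α d` in the definition of `γ`. -/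
def gammaMap : H ⊗[k] (H ⊗[k] (H ⊗[k] H)) →ₗ[k] H ⊗[k] H :=
  LinearMap.mul' k (H ⊗[k] H) ∘ₗ
    TensorProduct.map (LinearMap.mulRight k (QH.aE ⊗ₜ[k] QH.aE) ∘ₗ swapMap QH.S) LinearMap.id ∘ₗ
    (TensorProduct.assoc k H H (H ⊗[k] H)).symm.toLinearMap

@[simp]
theorem gammaMap_tmul (a b c d : H) :
    QH.gammaMap (a ⊗ₜ[k] (b ⊗ₜ[k] (c ⊗ₜ[k] d))) =
      (QH.S b * QH.aE * c) ⊗ₜ[k] (QH.S a * QH.aE * d) := by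
  simp [gammaMap]

theorem gammaMap_legTwo_comul_mul (z : H ⊗[k] (H ⊗[k] H))
    (w : H ⊗[k] (H ⊗[k] (H ⊗[k] H))) :
    QH.gammaMap (legTwo H QH.comul z * w) =
      QH.gammaMap (legTwo H (unitCounit QH.counit) z * w) := by
  refine apply_map_mul_eq_of_tmul _ (legTwo H QH.comul).toLinearMap
    (legTwo H (unitCounit QH.counit)).toLinearMap (fun a b c a' b' c' d' => ?_) z w
  simp only [AlgHom.toLinearMap_apply, legTwo_tmul_of_eq_sum (QH.hcomul _), Finset.sum_mul,
    map_sum, legTwo_unitCounit_tmul, tmul_mul_tmul, gammaMap_tmul, QH.S_mul, mul_assoc,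
    smul_mul_assoc, map_smul, ← sum_tmul, ← Finset.mul_sum, QH.sum_antipode_left_mul, one_mul,
    mul_smul_comm, ← smul_tmul']

theorem gammaMap_mul_legOne (w : H ⊗[k] (H ⊗[k] (H ⊗[k] H))) (h : H) (z : H ⊗[k] H) :
    QH.gammaMap (w * legOne QH.comul (h ⊗ₜ[k] z)) =
      swapMap QH.S (QH.comul h) * QH.gammaMap w * z := by
  have ext (u v u' v' : H) :
      QH.gammaMap ∘ₗ LinearMap.mulRight k (u ⊗ₜ[k] (v ⊗ₜ[k] (u' ⊗ₜ[k] v'))) =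
        LinearMap.mulRight k (u' ⊗ₜ[k] v') ∘ₗ
          LinearMap.mulLeft k (QH.S v ⊗ₜ[k] QH.S u) ∘ₗ QH.gammaMap :=
    linearMap_ext_four fun a b c d => by simp [QH.S_mul, mul_assoc]
  induction z with
  | zero => simp
  | add z z' hz hz' => simp only [tmul_add, map_add, mul_add, hz, hz']
  | tmul u' v' =>
    rw [legOne_tmul_of_eq_sum (QH.hcomul h), QH.hcomul h, Finset.mul_sum, map_sum, map_sum,
      Finset.sum_mul, Finset.sum_mul]
    exact Finset.sum_congr rfl fun i _ => by
      simpa using LinearMap.congr_fun (ext (QH.D1 h i) (QH.D2 h i) u' v') w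

theorem semiconjBy_tensorOne_reassoc (t : H ⊗[k] H) :
    SemiconjBy (tensorOne k H H H QH.reassoc) (legOne QH.comul (legOne QH.comul t))
      (legTwo H QH.comul (legOne QH.comul t)) := by
  induction t with
  | zero => simp
  | add x x' hx hx' => simpa only [map_add] using hx.add_right hx'
  | tmul u v =>
    have on_left : SemiconjBy (tensorOne k H H H QH.reassoc)
        (legOne QH.comul (legOne QH.comul (u ⊗ₜ[k] (1 : H))))
        (legTwo H QH.comul (legOne QH.comul (u ⊗ₜ[k] (1 : H)))) := by
      have semiconj := (QH.semiconjBy_reassoc u).map (tensorOne k H H H)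
      simpa [legOne_tmul_of_eq_sum (QH.hcomul _), legTwo_tmul_of_eq_sum (QH.hcomul _),
        QH.hcomul, tmul_sum] using semiconj
    have on_right : SemiconjBy (tensorOne k H H H QH.reassoc)
        (legOne QH.comul (legOne QH.comul ((1 : H) ⊗ₜ[k] v)))
        (legTwo H QH.comul (legOne QH.comul ((1 : H) ⊗ₜ[k] v))) := by
      simp [SemiconjBy, QuasiBialgebra.coe_reassoc, legOne, legTwo, one_def, Finset.sum_mul,
        Finset.mul_sum]
    simpa only [← map_mul, tmul_mul_tmul, mul_one, one_mul] using on_left.mul_right on_right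

/-- The element `γ = ∑ S(A²) α A³ ⊗ S(A¹) α A⁴`, where `A = (Φ ⊗ 1)(Δ ⊗ id ⊗ id)(Φ⁻¹)`. -/
def gamma : H ⊗[k] H :=
  QH.gammaMap (tensorOne k H H H QH.reassoc *
    legOne QH.comul (↑QH.reassoc⁻¹ : H ⊗[k] (H ⊗[k] H)))

theorem gamma_eq_sum : QH.gamma = ∑ p ∈ range QH.nP, ∑ j ∈ range QH.nQ, ∑ l ∈ range QH.nD,
    (QH.S (QH.X2 p * QH.D2 (QH.x1 j) l) * QH.aE * (QH.X3 p * QH.x2 j)) ⊗ₜ[k]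
      (QH.S (QH.X1 p * QH.D1 (QH.x1 j) l) * QH.aE * QH.x3 j) := by
  simp only [gamma, QH.coe_reassoc, QH.coe_reassoc_inv, map_sum, tensorOne_tmul,
    legOne_tmul_of_eq_sum (QH.hcomul _)]
  simp only [Finset.sum_mul]
  simp only [Finset.mul_sum, map_sum, tmul_mul_tmul, gammaMap_tmul, one_mul]

/-- The map `a ⊗ b ↦ (S ⊗ S)(Δᵒᵖ(a)) γ Δ(b)`. -/
def gammaConj : H ⊗[k] H →ₗ[k] H ⊗[k] H :=
  LinearMap.mul' k (H ⊗[k] H) ∘ₗ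
    TensorProduct.map (LinearMap.mulRight k QH.gamma ∘ₗ swapMap QH.S ∘ₗ QH.comul.toLinearMap)
      QH.comul.toLinearMap

@[simp]
theorem gammaConj_tmul (a b : H) :
    QH.gammaConj (a ⊗ₜ[k] b) = swapMap QH.S (QH.comul a) * QH.gamma * QH.comul b := by
  simp [gammaConj]

theorem gammaConj_one : QH.gammaConj 1 = QH.gamma := by
  rw [one_def, gammaConj_tmul, map_one, swapMap_one QH.S_one, one_mul, mul_one]

theorem gammaConj_mul_tmul (t : H ⊗[k] H) (a b : H) :
    QH.gammaConj (t * a ⊗ₜ[k] b) =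
      swapMap QH.S (QH.comul a) * QH.gammaConj t * QH.comul b := by
  induction t with
  | zero => simp
  | add x x' hx hx' => simp only [add_mul, mul_add, map_add, hx, hx']
  | tmul c d => simp only [tmul_mul_tmul, gammaConj_tmul, map_mul, swapMap_S_mul, mul_assoc]

theorem gammaConj_eq_gammaMap (t : H ⊗[k] H) :
    QH.gammaConj t = QH.gammaMap (tensorOne k H H H QH.reassoc *
      legOne QH.comul ((↑QH.reassoc⁻¹ : H ⊗[k] (H ⊗[k] H)) * idTensor H QH.comul t)) := by
  induction t with
  | zero => simp
  | add x x' hx hx' => simp only [mul_add, map_add, hx, hx']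
  | tmul a b =>
    rw [Algebra.TensorProduct.map_tmul, map_mul (legOne _), ← mul_assoc, gammaMap_mul_legOne]
    exact QH.gammaConj_tmul a b

theorem gammaMap_legTwo_unitCounit_mul (h : H) (w : H ⊗[k] (H ⊗[k] (H ⊗[k] H))) :
    QH.gammaMap (legTwo H (unitCounit QH.counit) (legOne QH.comul (QH.comul h)) * w) =
      QH.counit h • QH.gammaMap w := by
  have drop_counit : legTwo H (unitCounit QH.counit) (legOne QH.comul (QH.comul h)) =
      ∑ i ∈ range QH.nD, QH.D1 h i ⊗ₜ[k] ((1 : H) ⊗ₜ[k] ((1 : H) ⊗ₜ[k] QH.D2 h i)) := by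
    rw [QH.hcomul h]
    simp only [map_sum, legOne_tmul_of_eq_sum (QH.hcomul _), legTwo_unitCounit_tmul, smul_tmul',
      ← sum_tmul, QH.counit_r]
  have ext : QH.gammaMap ∘ₗ LinearMap.mulLeft k
      (legTwo H (unitCounit QH.counit) (legOne QH.comul (QH.comul h))) =
      QH.counit h • QH.gammaMap := by
    refine linearMap_ext_four fun a b c d => ?_
    simp only [drop_counit, LinearMap.comp_apply, LinearMap.mulLeft_apply, Finset.sum_mul, map_sum,
      tmul_mul_tmul, gammaMap_tmul, QH.S_mul, mul_assoc, one_mul, ← tmul_sum, ← Finset.mul_sum,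
      QH.sum_antipode_left_mul, mul_smul_comm, tmul_smul, LinearMap.smul_apply]
  exact LinearMap.congr_fun ext w

theorem gammaConj_comul (h : H) : QH.gammaConj (QH.comul h) = QH.counit h • QH.gamma := by
  rw [gammaConj_eq_gammaMap, (QH.semiconjBy_reassoc h).units_inv_symm_left.eq,
    map_mul (legOne _), ← mul_assoc, (QH.semiconjBy_tensorOne_reassoc _).eq, mul_assoc,
    gammaMap_legTwo_comul_mul, gammaMap_legTwo_unitCounit_mul, gamma]

theorem gammaConj_comul_mul (h : H) (t : H ⊗[k] H) :
    QH.gammaConj (QH.comul h * t) = QH.counit h • QH.gammaConj t := by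
  induction t with
  | zero => simp
  | add x x' hx hx' => simp only [mul_add, map_add, smul_add, hx, hx']
  | tmul a b =>
    rw [gammaConj_mul_tmul, gammaConj_comul, mul_smul_comm, smul_mul_assoc, gammaConj_tmul]

/-- The Drinfeld twist `f = ∑ (S ⊗ S)(Δᵒᵖ(x¹)) γ Δ(x² β S(x³))`. -/
def twist : H ⊗[k] H :=
  QH.gammaConj (QuasiBialgebra.regular QH.toQuasiBialgebra).pTilde

theorem twist_eq_sum_gammaConj : QH.twist = ∑ j ∈ range QH.nQ,
    QH.gammaConj (QH.x1 j ⊗ₜ[k] (QH.x2 j * QH.bE * QH.S (QH.x3 j))) := by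
  simp [twist, RightComoduleAlgebra.pTilde, RightComoduleAlgebra.coe_reassoc_inv,
    QuasiBialgebra.regular]

theorem gammaConj_pConj_regular (t : H ⊗[k] H) :
    QH.gammaConj ((QuasiBialgebra.regular QH.toQuasiBialgebra).pConj t) =
      QH.twist * QH.comul (QH.S (counitLeft QH.counit t)) := by
  induction t with
  | zero => simp
  | add x x' hx hx' => simp only [mul_add, map_add, hx, hx']
  | tmul a h =>
    rw [RightComoduleAlgebra.pConj_tmul, gammaConj_mul_tmul, map_one, swapMap_one QH.S_one,
      one_mul, counitLeft_tmul]
    simp only [map_smul, mul_smul_comm]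
    rw [← smul_mul_assoc]
    exact congrArg (· * _) (QH.gammaConj_comul_mul a _)

theorem twist_mul_comul_S (h : H) :
    QH.twist * QH.comul (QH.S h) = swapMap QH.S (QH.comul h) * QH.twist := by
  have cut_comul : (QuasiBialgebra.regular QH.toQuasiBialgebra).pConj (QH.comul h) =
      (QuasiBialgebra.regular QH.toQuasiBialgebra).pTilde * h ⊗ₜ[k] (1 : H) := by
    have pConj_one_mul := (QuasiBialgebra.regular QH.toQuasiBialgebra).pConj_mul_rho 1 h
    rw [one_mul, one_def, RightComoduleAlgebra.pConj_tmul, map_one, one_mul, QH.S_one, ← one_def,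
      mul_one] at pConj_one_mul
    exact pConj_one_mul
  have conj_cut := QH.gammaConj_pConj_regular (QH.comul h)
  rw [QH.counitLeft_comul, cut_comul, gammaConj_mul_tmul, map_one, mul_one] at conj_cut
  exact conj_cut.symm

theorem twist_mul_comul_aE : QH.twist * QH.comul QH.aE = QH.gamma := by
  have counitLeft_qTilde :
      counitLeft QH.counit (QuasiBialgebra.regular QH.toQuasiBialgebra).qTilde = QH.Sinv QH.aE := by
    have normal := congrArg QH.mulSinvAlpha QH.counitLeft_reassoc
    simpa [QuasiBialgebra.coe_reassoc, one_def, RightComoduleAlgebra.qTilde,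
      RightComoduleAlgebra.coe_reassoc, QuasiBialgebra.regular] using normal
  rw [← QH.S_Sinv QH.aE, ← counitLeft_qTilde, ← gammaConj_pConj_regular,
    RightComoduleAlgebra.pConj_qTilde, gammaConj_one]

end QuasiHopfAlgebra

/-! ### The element `q_L` -/

namespace QuasiHopfAlgebra

variable {k : Type*} [Field k] {H : Type*} [Ring H] [Algebra k H] (QH : QuasiHopfAlgebra k H)

/-- The map `a ⊗ b ⊗ c ↦ S(a) α b ⊗ c`, which cuts the first two legs of `q_L`. -/
def mulAlphaLeft : H ⊗[k] (H ⊗[k] H) →ₗ[k] H ⊗[k] H :=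
  (LinearMap.mul' k H ∘ₗ (LinearMap.mulRight k QH.aE ∘ₗ QH.S).rTensor H).rTensor H ∘ₗ
    (TensorProduct.assoc k H H H).symm.toLinearMap

@[simp]
theorem mulAlphaLeft_tmul (a b c : H) :
    QH.mulAlphaLeft (a ⊗ₜ[k] (b ⊗ₜ[k] c)) = (QH.S a * QH.aE * b) ⊗ₜ[k] c := by
  simp [mulAlphaLeft]

/-- The element `q_L = ∑ S(x¹) α x² ⊗ x³`. -/
def qLeft : H ⊗[k] H := QH.mulAlphaLeft ↑QH.reassoc⁻¹

theorem mulAlphaLeft_mul_tmul (w : H ⊗[k] (H ⊗[k] H)) (h : H) (z : H ⊗[k] H) :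
    QH.mulAlphaLeft (w * h ⊗ₜ[k] z) = QH.S h ⊗ₜ[k] (1 : H) * QH.mulAlphaLeft w * z := by
  induction z with
  | zero => simp
  | add z z' hz hz' => simp only [tmul_add, mul_add, map_add, hz, hz']
  | tmul u v =>
    have ext : QH.mulAlphaLeft ∘ₗ LinearMap.mulRight k (h ⊗ₜ[k] (u ⊗ₜ[k] v)) =
        LinearMap.mulRight k (u ⊗ₜ[k] v) ∘ₗ
          LinearMap.mulLeft k (QH.S h ⊗ₜ[k] (1 : H)) ∘ₗ QH.mulAlphaLeft :=
      linearMap_ext_three fun a b c => by simp [QH.S_mul, mul_assoc]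
    exact LinearMap.congr_fun ext w

theorem mulAlphaLeft_legOne_tmul_mul (g h : H) (w : H ⊗[k] (H ⊗[k] H)) :
    QH.mulAlphaLeft (legOne QH.comul (g ⊗ₜ[k] h) * w) =
      (1 : H) ⊗ₜ[k] (QH.counit g • h) * QH.mulAlphaLeft w := by
  have ext : QH.mulAlphaLeft ∘ₗ LinearMap.mulLeft k (legOne QH.comul (g ⊗ₜ[k] h)) =
      LinearMap.mulLeft k ((1 : H) ⊗ₜ[k] (QH.counit g • h)) ∘ₗ QH.mulAlphaLeft := by
    refine linearMap_ext_three fun a b c => ?_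
    simp only [LinearMap.comp_apply, LinearMap.mulLeft_apply,
      legOne_tmul_of_eq_sum (QH.hcomul g), Finset.sum_mul, tmul_mul_tmul, map_sum,
      mulAlphaLeft_tmul, QH.S_mul, mul_assoc, ← sum_tmul, ← Finset.mul_sum,
      QH.sum_antipode_left_mul, mul_smul_comm, smul_mul_assoc, smul_tmul, one_mul]
  exact LinearMap.congr_fun ext w

theorem mulAlphaLeft_legOne_comul_mul (h : H) (w : H ⊗[k] (H ⊗[k] H)) :
    QH.mulAlphaLeft (legOne QH.comul (QH.comul h) * w) =
      (1 : H) ⊗ₜ[k] h * QH.mulAlphaLeft w := by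
  rw [QH.hcomul h, map_sum, Finset.sum_mul, map_sum]
  simp only [mulAlphaLeft_legOne_tmul_mul]
  rw [← Finset.sum_mul, ← tmul_sum, QH.counit_l]

theorem sum_S_mul_qLeft_mul_comul (h : H) :
    ∑ i ∈ range QH.nD, QH.S (QH.D1 h i) ⊗ₜ[k] (1 : H) * QH.qLeft * QH.comul (QH.D2 h i) =
      (1 : H) ⊗ₜ[k] h * QH.qLeft := by
  rw [qLeft, ← mulAlphaLeft_legOne_comul_mul, ← (QH.semiconjBy_reassoc h).units_inv_symm_left.eq,
    QH.hcomul h]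
  simp only [map_sum, Finset.mul_sum, Algebra.TensorProduct.map_tmul, AlgHom.coe_id, id_eq,
    mulAlphaLeft_mul_tmul]

theorem gammaMap_one_tmul_mul (w : H ⊗[k] (H ⊗[k] H)) (a b : H) (z : H ⊗[k] H) :
    QH.gammaMap ((1 : H) ⊗ₜ[k] w * a ⊗ₜ[k] (b ⊗ₜ[k] z)) =
      QH.S b ⊗ₜ[k] (QH.S a * QH.aE) * QH.mulAlphaLeft w * z := by
  induction z with
  | zero => simp
  | add z z' hz hz' => simp only [tmul_add, mul_add, map_add, hz, hz']
  | tmul u v =>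
    have ext : QH.gammaMap ∘ₗ LinearMap.mulRight k (a ⊗ₜ[k] (b ⊗ₜ[k] (u ⊗ₜ[k] v))) ∘ₗ
          TensorProduct.mk k H (H ⊗[k] (H ⊗[k] H)) 1 =
        LinearMap.mulRight k (u ⊗ₜ[k] v) ∘ₗ
          LinearMap.mulLeft k (QH.S b ⊗ₜ[k] (QH.S a * QH.aE)) ∘ₗ QH.mulAlphaLeft :=
      linearMap_ext_three fun x y t => by simp [QH.S_mul, mul_assoc]
    exact LinearMap.congr_fun ext w

theorem gamma_eq_sum_qLeft : QH.gamma = ∑ s ∈ range QH.nP,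
    QH.S (QH.X2 s) ⊗ₜ[k] (QH.S (QH.X1 s) * QH.aE) * QH.qLeft * QH.comul (QH.X3 s) := by
  have legTwo_counit :
      legTwo H (unitCounit QH.counit) (↑QH.reassoc⁻¹ : H ⊗[k] (H ⊗[k] H)) = 1 :=
    (QuasiBialgebra.regular QH.toQuasiBialgebra).map_reassoc_inv_eq_one
      (QuasiBialgebra.regular QH.toQuasiBialgebra).legTwo_unitCounit_reassoc
  have gamma_eq : QH.gamma = QH.gammaMap
      (legTwo H QH.comul (↑QH.reassoc⁻¹ : H ⊗[k] (H ⊗[k] H)) *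
        ((1 : H) ⊗ₜ[k] (↑QH.reassoc⁻¹ : H ⊗[k] (H ⊗[k] H)) *
          legThree H QH.comul QH.reassoc)) :=
    congrArg QH.gammaMap
      (QuasiBialgebra.regular QH.toQuasiBialgebra).tensorOne_reassoc_mul_legOne_inv
  rw [gamma_eq, gammaMap_legTwo_comul_mul, legTwo_counit, one_mul, QH.coe_reassoc, map_sum,
    Finset.mul_sum, map_sum]
  exact Finset.sum_congr rfl fun s _ => QH.gammaMap_one_tmul_mul _ _ _ _

end QuasiHopfAlgebra

namespace DrinfeldTwist

variable {k : Type*} [Field k] {H : Type*} [Ring H] [Algebra k H] {QH : QuasiHopfAlgebra k H}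
  (DT : DrinfeldTwist QH)

/-- The inverse `f⁻¹` of the Drinfeld twist. -/
def inverse : H ⊗[k] H := ∑ t ∈ range DT.nf, DT.g1 t ⊗ₜ[k] DT.g2 t

theorem twist_eq_sum : QH.twist = ∑ t ∈ range DT.nf, DT.f1 t ⊗ₜ[k] DT.f2 t := by
  rw [DT.h_f, QH.twist_eq_sum_gammaConj]
  refine Finset.sum_congr rfl fun j _ => ?_
  rw [QH.gammaConj_tmul, QH.gamma_eq_sum, QH.hcomul (QH.x1 j),
    QH.hcomul (QH.x2 j * QH.bE * QH.S (QH.x3 j))]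
  simp only [map_sum, Finset.sum_mul, swapMap_tmul]
  simp only [Finset.mul_sum, Finset.sum_mul, tmul_mul_tmul]
  refine Finset.sum_congr rfl fun l _ => Finset.sum_comm.trans ?_
  refine Finset.sum_congr rfl fun p _ => Finset.sum_comm.trans ?_
  exact Finset.sum_congr rfl fun q _ => Finset.sum_comm

theorem twist_mul_inverse : QH.twist * DT.inverse = 1 := by
  rw [DT.twist_eq_sum, inverse, one_def, ← DT.f_inv, Finset.sum_mul]
  simp only [Finset.mul_sum, tmul_mul_tmul]

theorem swapMap_Sinv_gamma_mul (d : H) :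
    swapMap QH.Sinv (QH.gamma * QH.comul d * DT.inverse) = QH.comul (QH.Sinv (QH.aE * d)) := by
  have conj_twist : QH.gamma * QH.comul d * DT.inverse =
      swapMap QH.S (QH.comul (QH.Sinv (QH.aE * d))) := by
    rw [← QH.twist_mul_comul_aE, mul_assoc QH.twist, ← map_mul, ← QH.S_Sinv (QH.aE * d),
      QH.twist_mul_comul_S, QH.S_Sinv, mul_assoc, DT.twist_mul_inverse, mul_one]
  rw [conj_twist, swapMap_leftInverse QH.Sinv_S]

/-- The map `b ⊗ c ⊗ d ↦ (S⁻¹ ⊗ S⁻¹)(τ((1 ⊗ α) q_L Δ(d) f⁻¹)) (b ⊗ c)`, with `τ` the flip. It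
carries the pentagon for `Φ_ρ` to the colinearity of `θ⁻¹` on `1 ⊗ 1`. -/
def qLeftMap : H ⊗[k] (H ⊗[k] H) →ₗ[k] H ⊗[k] H :=
  LinearMap.mul' k (H ⊗[k] H) ∘ₗ (TensorProduct.comm k (H ⊗[k] H) (H ⊗[k] H)).toLinearMap ∘ₗ
    TensorProduct.map LinearMap.id (swapMap QH.Sinv ∘ₗ LinearMap.mulRight k DT.inverse ∘ₗ
      LinearMap.mulLeft k ((1 : H) ⊗ₜ[k] QH.aE * QH.qLeft) ∘ₗ QH.comul.toLinearMap) ∘ₗ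
    (TensorProduct.assoc k H H H).symm.toLinearMap

theorem qLeftMap_tmul (b c d : H) :
    DT.qLeftMap (b ⊗ₜ[k] (c ⊗ₜ[k] d)) =
      swapMap QH.Sinv ((1 : H) ⊗ₜ[k] QH.aE * QH.qLeft * QH.comul d * DT.inverse) *
        b ⊗ₜ[k] c := by
  simp [qLeftMap, mul_assoc]

theorem sum_qLeftMap_comul_mul (h b c d : H) :
    ∑ i ∈ range QH.nD, DT.qLeftMap (b ⊗ₜ[k] ((QH.D1 h i * c) ⊗ₜ[k] (QH.D2 h i * d))) =
      swapMap QH.Sinv ((1 : H) ⊗ₜ[k] (QH.aE * h) * (QH.qLeft * QH.comul d * DT.inverse)) *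
        b ⊗ₜ[k] c := by
  have summand (i : ℕ) : DT.qLeftMap (b ⊗ₜ[k] ((QH.D1 h i * c) ⊗ₜ[k] (QH.D2 h i * d))) =
      swapMap QH.Sinv ((1 : H) ⊗ₜ[k] QH.aE * (QH.S (QH.D1 h i) ⊗ₜ[k] (1 : H) * QH.qLeft *
        QH.comul (QH.D2 h i)) * (QH.comul d * DT.inverse)) * b ⊗ₜ[k] c := by
    have absorb := QH.swapMap_Sinv_mul_tmul 1 (QH.D1 h i) b c
    simp only [one_mul, QH.S_one] at absorb
    rw [qLeftMap_tmul, absorb, map_mul QH.comul]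
    simp only [← mul_assoc, tmul_mul_tmul, one_mul, mul_one]
  simp only [summand]
  rw [← Finset.sum_mul, ← map_sum, ← Finset.sum_mul, ← Finset.mul_sum,
    QH.sum_S_mul_qLeft_mul_comul]
  simp only [← mul_assoc, tmul_mul_tmul, one_mul]

theorem qLeftMap_reassoc_mul (b c d : H) :
    DT.qLeftMap (QH.reassoc * b ⊗ₜ[k] (c ⊗ₜ[k] d)) =
      QH.comul (QH.Sinv (QH.aE * d)) * b ⊗ₜ[k] c := by
  rw [← DT.swapMap_Sinv_gamma_mul, QH.gamma_eq_sum_qLeft]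
  simp only [QH.coe_reassoc, Finset.sum_mul, map_sum, tmul_mul_tmul]
  refine Finset.sum_congr rfl fun s _ => ?_
  rw [qLeftMap_tmul, QH.swapMap_Sinv_mul_tmul, map_mul QH.comul]
  simp only [← mul_assoc, tmul_mul_tmul, mul_one]

end DrinfeldTwist

/-! ### Colinearity of `θ` -/

namespace RightComoduleAlgebra

variable {k : Type*} [Field k] {H : Type*} [Ring H] [Algebra k H] {QH : QuasiHopfAlgebra k H}
  {A : Type*} [Ring A] [Algebra k A] (CA : RightComoduleAlgebra QH.toQuasiBialgebra A)
  (DT : DrinfeldTwist QH)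

theorem lTensor_qLeftMap_legTwo_mul_tensorOne (z w : A ⊗[k] (H ⊗[k] H)) :
    DT.qLeftMap.lTensor A ((1 : A) ⊗ₜ[k] (QH.reassoc : H ⊗[k] (H ⊗[k] H)) *
        (legTwo A QH.comul z * tensorOne k A H H w)) =
      idTensor A QH.comul (QH.mulSinvAlpha.lTensor A z) * w := by
  have bilinear_eq :
      ((LinearMap.mul k (A ⊗[k] (H ⊗[k] (H ⊗[k] H)))).compl₁₂ (legTwo A QH.comul).toLinearMap
          (tensorOne k A H H).toLinearMap).compr₂ (DT.qLeftMap.lTensor A ∘ₗ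
            LinearMap.mulLeft k ((1 : A) ⊗ₜ[k] (QH.reassoc : H ⊗[k] (H ⊗[k] H)))) =
        LinearMap.mul k (A ⊗[k] (H ⊗[k] H)) ∘ₗ (idTensor A QH.comul).toLinearMap ∘ₗ
          QH.mulSinvAlpha.lTensor A := by
    refine linearMap_ext_three fun a b c => linearMap_ext_three fun a' b' c' => ?_
    simp only [LinearMap.compr₂_apply, LinearMap.compl₁₂_apply, LinearMap.mul_apply',
      LinearMap.comp_apply, LinearMap.mulLeft_apply, AlgHom.toLinearMap_apply]
    simp only [tensorOne_tmul, legTwo_tmul_of_eq_sum (QH.hcomul _), Finset.sum_mul,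
      Finset.mul_sum, map_sum, tmul_mul_tmul, LinearMap.lTensor_tmul, DT.qLeftMap_reassoc_mul,
      one_mul, mul_one, Algebra.TensorProduct.map_tmul, AlgHom.coe_id, id_eq,
      QH.mulSinvAlpha_tmul, map_mul]
    rw [← tmul_sum, ← Finset.mul_sum, QH.hcomul b, mul_assoc, Finset.sum_mul]
    simp only [tmul_mul_tmul]
  exact LinearMap.congr_fun (LinearMap.congr_fun bilinear_eq z) w

theorem lTensor_qLeftMap_legThree_mul_legOne (a a' : A) (b c b' c' : H) :
    DT.qLeftMap.lTensor A (legThree A QH.comul (a ⊗ₜ[k] (b ⊗ₜ[k] c)) *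
        legOne CA.rho (a' ⊗ₜ[k] (b' ⊗ₜ[k] c'))) =
      ∑ r ∈ range CA.nR, (a * CA.r0 a' r) ⊗ₜ[k]
        (swapMap QH.Sinv ((1 : H) ⊗ₜ[k] (QH.aE * c) * (QH.qLeft * QH.comul c' * DT.inverse)) *
          (b * CA.r1 a' r) ⊗ₜ[k] b') := by
  simp only [legThree_tmul_of_eq_sum (QH.hcomul _), legOne_tmul_of_eq_sum (CA.hrho _),
    Finset.mul_sum, Finset.sum_mul, tmul_mul_tmul, map_sum, LinearMap.lTensor_tmul]
  simp only [← tmul_sum, DT.sum_qLeftMap_comul_mul]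

/-- The map `u ⊗ v ↦ S⁻¹(v) ⊗ a ⊗ S⁻¹(u) b`. -/
def insertSinv (QH : QuasiHopfAlgebra k H) (a : A) (b : H) :
    H ⊗[k] H →ₗ[k] (H ⊗[k] A) ⊗[k] H :=
  TensorProduct.map ((TensorProduct.mk k H A).flip a ∘ₗ QH.Sinv)
    (LinearMap.mulRight k b ∘ₗ QH.Sinv) ∘ₗ (TensorProduct.comm k H H).toLinearMap

@[simp]
theorem insertSinv_tmul (a : A) (b u v : H) :
    insertSinv QH a b (u ⊗ₜ[k] v) = (QH.Sinv v ⊗ₜ[k] a) ⊗ₜ[k] (QH.Sinv u * b) := by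
  simp [insertSinv]

/-- The coaction of `𝒰` on `1 ⊗ 1`. -/
def coactOne : (H ⊗[k] A) ⊗[k] H :=
  ∑ s ∈ range CA.nP,
    insertSinv QH (CA.P1 s) (CA.P2 s) (QH.qLeft * QH.comul (CA.P3 s) * DT.inverse)

theorem coactOne_eq_sum : CA.coactOne DT =
    ∑ s ∈ range CA.nP, ∑ l ∈ range QH.nD, ∑ j ∈ range QH.nQ, ∑ t ∈ range DT.nf,
      (QH.Sinv (QH.x3 j * QH.D2 (CA.P3 s) l * DT.g2 t) ⊗ₜ[k] CA.P1 s) ⊗ₜ[k]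
        (QH.Sinv ((QH.S (QH.x1 j) * QH.aE * QH.x2 j) * QH.D1 (CA.P3 s) l * DT.g1 t) *
          CA.P2 s) := by
  refine Finset.sum_congr rfl fun s _ => ?_
  simp only [QuasiHopfAlgebra.qLeft, QH.coe_reassoc_inv, DrinfeldTwist.inverse, QH.hcomul,
    map_sum, Finset.sum_mul, QH.mulAlphaLeft_tmul]
  simp only [Finset.mul_sum, Finset.sum_mul, map_sum, tmul_mul_tmul, insertSinv_tmul]
  conv_rhs => rw [Finset.sum_comm]
  exact Finset.sum_congr rfl fun j _ => Finset.sum_comm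

/-- The coaction `a ⊗ h ↦ ∑ a X̃¹ ⊗ h₁ X̃² ⊗ h₂ X̃³` of `𝒱`. -/
def coactV : A ⊗[k] H →ₗ[k] (A ⊗[k] H) ⊗[k] H :=
  (TensorProduct.assoc k A H H).symm.toLinearMap ∘ₗ
    LinearMap.mulRight k (CA.reassoc : A ⊗[k] (H ⊗[k] H)) ∘ₗ (idTensor A QH.comul).toLinearMap

variable (k H A) in
/-- The algebra map `h ⊗ h' ↦ (h ⊗ 1) ⊗ h'`. -/
def insertMiddleOne : H ⊗[k] H →ₐ[k] (H ⊗[k] A) ⊗[k] H :=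
  Algebra.TensorProduct.map includeLeft (AlgHom.id k H)

variable (k H A) in
/-- The algebra map `a ⊗ h ↦ (1 ⊗ a) ⊗ h`. -/
def insertLeftOne : A ⊗[k] H →ₐ[k] (H ⊗[k] A) ⊗[k] H :=
  Algebra.TensorProduct.map includeRight (AlgHom.id k H)

/-- The coaction of `𝒰`, `h ⊗ a ↦ (h₁ ⊗ 1 ⊗ h₂) ρ_𝒰(1 ⊗ 1) (1 ⊗ a⟨0⟩ ⊗ a⟨1⟩)`. -/
def coactU : H ⊗[k] A →ₗ[k] (H ⊗[k] A) ⊗[k] H :=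
  LinearMap.mul' k _ ∘ₗ
    TensorProduct.map
      (LinearMap.mulRight k (CA.coactOne DT) ∘ₗ
        ((insertMiddleOne k H A).comp QH.comul).toLinearMap)
      ((insertLeftOne k H A).comp CA.rho).toLinearMap

theorem coactU_tmul (h : H) (a : A) : CA.coactU DT (h ⊗ₜ[k] a) =
    insertMiddleOne k H A (QH.comul h) * CA.coactOne DT * insertLeftOne k H A (CA.rho a) := by
  simp [coactU]

theorem coactV_tmul_eq_sum (a : A) (h : H) :
    CA.coactV (a ⊗ₜ[k] h) = ∑ i ∈ range QH.nD, ∑ s ∈ range CA.nP,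
      ((a * CA.P1 s) ⊗ₜ[k] (QH.D1 h i * CA.P2 s)) ⊗ₜ[k] (QH.D2 h i * CA.P3 s) := by
  simp [coactV, QH.hcomul h, tmul_sum, coe_reassoc, Finset.mul_sum]

theorem coactU_tmul_eq_sum (h : H) (a : A) : CA.coactU DT (h ⊗ₜ[k] a) =
    ∑ i ∈ range QH.nD, ∑ s ∈ range CA.nP, ∑ l ∈ range QH.nD,
      ∑ j ∈ range QH.nQ, ∑ t ∈ range DT.nf, ∑ r ∈ range CA.nR,
        ((QH.D1 h i * QH.Sinv (QH.x3 j * QH.D2 (CA.P3 s) l * DT.g2 t)) ⊗ₜ[k]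
            (CA.P1 s * CA.r0 a r)) ⊗ₜ[k]
          (QH.D2 h i *
            QH.Sinv ((QH.S (QH.x1 j) * QH.aE * QH.x2 j) * QH.D1 (CA.P3 s) l * DT.g1 t) *
            (CA.P2 s * CA.r1 a r)) := by
  rw [coactU_tmul, coactOne_eq_sum, QH.hcomul h, CA.hrho a, mul_assoc]
  simp only [map_sum, Finset.sum_mul]
  simp only [Finset.mul_sum, insertMiddleOne, insertLeftOne, Algebra.TensorProduct.map_tmul,
    Algebra.TensorProduct.includeLeft_apply, Algebra.TensorProduct.includeRight_apply,
    AlgHom.coe_id, id_eq, tmul_mul_tmul, one_mul, mul_one, mul_assoc]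

theorem assoc_rTensor_thetaInv_insertSinv (a : A) (b : H) (x : H ⊗[k] H) :
    TensorProduct.assoc k A H H (CA.thetaInv.rTensor H (insertSinv QH a b x)) =
      ∑ s ∈ range CA.nP, ∑ r ∈ range CA.nR, (CA.P1 s * CA.r0 a r) ⊗ₜ[k]
        (swapMap QH.Sinv ((1 : H) ⊗ₜ[k] (QH.aE * CA.P3 s) * x) *
          (CA.P2 s * CA.r1 a r) ⊗ₜ[k] b) := by
  induction x with
  | zero => simp
  | add x x' hx hx' =>
    simp only [map_add, hx, hx', mul_add, add_mul, tmul_add, Finset.sum_add_distrib]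
  | tmul u v =>
    simp only [insertSinv_tmul, LinearMap.rTensor_tmul, thetaInv_tmul_eq_sum, sum_tmul, map_sum,
      TensorProduct.assoc_tmul, tmul_mul_tmul, swapMap_tmul, QH.Sinv_mul, one_mul, mul_assoc]

theorem assoc_rTensor_thetaInv_coactOne :
    TensorProduct.assoc k A H H (CA.thetaInv.rTensor H (CA.coactOne DT)) =
      idTensor A QH.comul CA.qTilde * CA.reassoc := by
  have pentagon := congrArg (DT.qLeftMap.lTensor A) CA.pentagon_reassoc
  rw [mul_assoc, lTensor_qLeftMap_legTwo_mul_tensorOne] at pentagon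
  rw [qTilde, pentagon]
  simp only [coe_reassoc, coactOne, map_sum, assoc_rTensor_thetaInv_insertSinv, Finset.sum_mul]
  simp only [Finset.mul_sum, map_sum, lTensor_qLeftMap_legThree_mul_legOne]
  exact Finset.sum_comm

theorem assoc_rTensor_thetaInv_mul (x : H ⊗[k] H) (w : (H ⊗[k] A) ⊗[k] H) (y : A ⊗[k] H) :
    TensorProduct.assoc k A H H
        (CA.thetaInv.rTensor H (insertMiddleOne k H A x * w * insertLeftOne k H A y)) =
      (1 : A) ⊗ₜ[k] x * TensorProduct.assoc k A H H (CA.thetaInv.rTensor H w) *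
        legOne CA.rho y := by
  have on_tmul (h h' g : H) (a : A) :
      (TensorProduct.assoc k A H H).toLinearMap ∘ₗ CA.thetaInv.rTensor H ∘ₗ
          LinearMap.mulRight k (insertLeftOne k H A (a ⊗ₜ[k] g)) ∘ₗ
          LinearMap.mulLeft k (insertMiddleOne k H A (h ⊗ₜ[k] h')) =
        LinearMap.mulRight k (legOne CA.rho (a ⊗ₜ[k] g)) ∘ₗ
          LinearMap.mulLeft k ((1 : A) ⊗ₜ[k] (h ⊗ₜ[k] h')) ∘ₗ
          (TensorProduct.assoc k A H H).toLinearMap ∘ₗ CA.thetaInv.rTensor H := by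
    refine TensorProduct.ext' fun u v => ?_
    have one_tmul_eq : (1 : A) ⊗ₜ[k] (h ⊗ₜ[k] h') =
        Algebra.TensorProduct.assoc k k k A H H (((1 : A) ⊗ₜ[k] h) ⊗ₜ[k] h') := rfl
    have legOne_eq : legOne CA.rho (a ⊗ₜ[k] g) =
        Algebra.TensorProduct.assoc k k k A H H (CA.rho a ⊗ₜ[k] g) := by
      simp [legOne]
    have assoc_eq (z : (A ⊗[k] H) ⊗[k] H) : TensorProduct.assoc k A H H z =
        Algebra.TensorProduct.assoc k k k A H H z := rfl
    simp only [LinearMap.comp_apply, LinearMap.mulRight_apply, LinearMap.mulLeft_apply,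
      LinearEquiv.coe_coe, assoc_eq, one_tmul_eq, legOne_eq, ← map_mul]
    simp [insertMiddleOne, insertLeftOne, thetaInv_tmul_one_mul, thetaInv_mul_one_tmul]
  induction x with
  | zero => simp
  | add x x' hx hx' => simp only [map_add, add_mul, tmul_add, hx, hx']
  | tmul h h' =>
    induction y with
    | zero => simp
    | add y y' hy hy' => simp only [map_add, mul_add, hy, hy']
    | tmul a g => exact LinearMap.congr_fun (on_tmul h h' g a) w

theorem assoc_rTensor_thetaInv_coactU (u : H ⊗[k] A) :
    TensorProduct.assoc k A H H (CA.thetaInv.rTensor H (CA.coactU DT u)) =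
      idTensor A QH.comul (CA.thetaInv u) * CA.reassoc := by
  induction u with
  | zero => simp
  | add u u' hu hu' => simp only [map_add, add_mul, hu, hu']
  | tmul h a =>
    rw [coactU_tmul, assoc_rTensor_thetaInv_mul, assoc_rTensor_thetaInv_coactOne, ← mul_assoc,
      mul_assoc, (CA.semiconjBy_reassoc a).eq, thetaInv_tmul, map_mul, map_mul,
      Algebra.TensorProduct.map_tmul, map_one, ← mul_assoc]

theorem rTensor_thetaInv_coactU (u : H ⊗[k] A) :
    CA.thetaInv.rTensor H (CA.coactU DT u) = CA.coactV (CA.thetaInv u) := by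
  rw [← LinearEquiv.symm_apply_apply (TensorProduct.assoc k A H H)
    (CA.thetaInv.rTensor H (CA.coactU DT u)), assoc_rTensor_thetaInv_coactU]
  rfl

theorem coactU_theta (t : A ⊗[k] H) :
    CA.coactU DT (CA.theta t) = CA.theta.rTensor H (CA.coactV t) := by
  have theta_comp_thetaInv : CA.theta ∘ₗ CA.thetaInv = LinearMap.id :=
    LinearMap.ext CA.theta_thetaInv
  conv_rhs => rw [← CA.thetaInv_theta t]
  rw [← rTensor_thetaInv_coactU, ← LinearMap.rTensor_comp_apply, theta_comp_thetaInv,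
    LinearMap.rTensor_id_apply]

end RightComoduleAlgebra

end ThetaIsomorphism

/-- With `𝒱 = 𝔄 ⊗ H` and `𝒰 = H ⊗ 𝔄` carrying the two-sided
`(𝔄,H)`-Hopf module structures of the previous statements, the map
`θ(a⊗h) = ∑ h S⁻¹(a⟨1⟩ p̃²ρ) ⊗ a⟨0⟩ p̃¹ρ` is an isomorphism of two-sided
`(𝔄,H)`-Hopf modules, with inverse `θ⁻¹(h⊗a) = ∑ q̃¹ρ a⟨0⟩ ⊗ h q̃²ρ a⟨1⟩`. -/
theorem theta_iso_of_two_sided_hopf_modules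
    {k : Type*} [Field k] {H : Type*} [Ring H] [Algebra k H]
    (QH : QuasiHopfAlgebra k H) (DT : DrinfeldTwist QH)
    {A : Type*} [Ring A] [Algebra k A]
    (CA : RightComoduleAlgebra QH.toQuasiBialgebra A)
    (TV : TwoSidedHopfModule QH.toQuasiBialgebra CA (A ⊗[k] H))
    (hV1 : ∀ (h : H) (a : A) (h' : H), TV.ha h (a ⊗ₜ[k] h') = a ⊗ₜ[k] (h * h'))
    (hV2 : ∀ (a' a : A) (h : H), TV.ra a' (a ⊗ₜ[k] h) =
      ∑ i ∈ Finset.range CA.nR, (a * CA.r0 a' i) ⊗ₜ[k] (h * CA.r1 a' i))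
    (hV3 : ∀ (a : A) (h : H), TV.rho (a ⊗ₜ[k] h) =
      ∑ i ∈ Finset.range QH.nD, ∑ s ∈ Finset.range CA.nP,
        ((a * CA.P1 s) ⊗ₜ[k] (QH.D1 h i * CA.P2 s)) ⊗ₜ[k] (QH.D2 h i * CA.P3 s))
    (TU : TwoSidedHopfModule QH.toQuasiBialgebra CA (H ⊗[k] A))
    (hU1 : ∀ (h h' : H) (a : A), TU.ha h (h' ⊗ₜ[k] a) = (h * h') ⊗ₜ[k] a)
    (hU2 : ∀ (a' : A) (h : H) (a : A), TU.ra a' (h ⊗ₜ[k] a) = h ⊗ₜ[k] (a * a'))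
    (hU3 : ∀ (h : H) (a : A), TU.rho (h ⊗ₜ[k] a) =
      ∑ i ∈ Finset.range QH.nD, ∑ s ∈ Finset.range CA.nP, ∑ l ∈ Finset.range QH.nD,
        ∑ j ∈ Finset.range QH.nQ, ∑ t ∈ Finset.range DT.nf, ∑ r ∈ Finset.range CA.nR,
        ((QH.D1 h i * QH.Sinv (QH.x3 j * QH.D2 (CA.P3 s) l * DT.g2 t)) ⊗ₜ[k]
            (CA.P1 s * CA.r0 a r)) ⊗ₜ[k]
          (QH.D2 h i *
            QH.Sinv ((QH.S (QH.x1 j) * QH.aE * QH.x2 j) * QH.D1 (CA.P3 s) l * DT.g1 t) *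
            (CA.P2 s * CA.r1 a r))) :
    ∃ (θ : A ⊗[k] H →ₗ[k] H ⊗[k] A) (θinv : H ⊗[k] A →ₗ[k] A ⊗[k] H),
      (∀ (a : A) (h : H), θ (a ⊗ₜ[k] h) =
        ∑ r ∈ Finset.range CA.nR, ∑ j ∈ Finset.range CA.nQ,
          (h * QH.Sinv (CA.r1 a r * (CA.Q2 j * QH.bE * QH.S (CA.Q3 j)))) ⊗ₜ[k]
            (CA.r0 a r * CA.Q1 j)) ∧
      (∀ (h : H) (a : A), θinv (h ⊗ₜ[k] a) =
        ∑ s ∈ Finset.range CA.nP, ∑ r ∈ Finset.range CA.nR,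
          (CA.P1 s * CA.r0 a r) ⊗ₜ[k]
            (h * (QH.Sinv (QH.aE * CA.P3 s) * CA.P2 s) * CA.r1 a r)) ∧
      (∀ m, θinv (θ m) = m) ∧ (∀ u, θ (θinv u) = u) ∧
      (∀ (h : H) m, θ (TV.ha h m) = TU.ha h (θ m)) ∧
      (∀ (a : A) m, θ (TV.ra a m) = TU.ra a (θ m)) ∧
      (∀ m, TU.rho (θ m) = (TensorProduct.map θ LinearMap.id) (TV.rho m)) := by
  have haV (h : H) : TV.ha h = LinearMap.mulLeft k ((1 : A) ⊗ₜ[k] h) :=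
    TensorProduct.ext' fun a h' => by simp [hV1]
  have haU (h : H) : TU.ha h = LinearMap.mulLeft k (h ⊗ₜ[k] (1 : A)) :=
    TensorProduct.ext' fun h' a => by simp [hU1]
  have raV (a : A) : TV.ra a = LinearMap.mulRight k (CA.rho a) :=
    TensorProduct.ext' fun a' h => by simp [hV2, CA.hrho a, Finset.mul_sum]
  have raU (a : A) : TU.ra a = LinearMap.mulRight k ((1 : H) ⊗ₜ[k] a) :=
    TensorProduct.ext' fun h a' => by simp [hU2]
  have rhoV : TV.rho = CA.coactV :=
    TensorProduct.ext' fun a h => (hV3 a h).trans (CA.coactV_tmul_eq_sum a h).symm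
  have rhoU : TU.rho = CA.coactU DT :=
    TensorProduct.ext' fun h a => (hU3 h a).trans (CA.coactU_tmul_eq_sum DT h a).symm
  refine ⟨CA.theta, CA.thetaInv, CA.theta_tmul_eq_sum, CA.thetaInv_tmul_eq_sum,
    CA.thetaInv_theta, CA.theta_thetaInv, fun h m => ?_, fun a m => ?_, fun m => ?_⟩
  · rw [haV, haU]
    exact CA.theta_one_tmul_mul h m
  · rw [raV, raU]
    exact CA.theta_mul_rho m a
  · rw [rhoV, rhoU]
    exact CA.coactU_theta DT m
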